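/- arXiv:2205.13729 — 3 statements merged into one kernel-verified Lean document; each statement's English description precedes it below -/
import Mathlib

section
/- Let m ≥ 2 and n ≥ 1, and let ℂP^m denote the complex projective space of lines in ℂ^{m+1}, equipped with the quotient topology. Let A : ℂP^m → M(n,ℂ) be a continuous map such that for every point x, the matrix A(x) is normal (A(x)A(x)* = A(x)*A(x), where * denotes conjugate transpose) and has n pairwise distinct complex eigenvalues. Then A is diagonalizable over ℂP^m: there exists a continuous map U : ℂP^m → M(n,ℂ) with U(x)*U(x) = I for all x such that U(x)*A(x)U(x) is a diagonal matrix for every x. -/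
open Matrix

/-- The quotient topology on the projectivization of a topological vector space. -/
noncomputable instance projectivizationTopology (K V : Type*) [DivisionRing K] [AddCommGroup V]
    [Module K V] [TopologicalSpace V] : TopologicalSpace (Projectivization K V) :=
  inferInstanceAs (TopologicalSpace (Quotient (projectivizationSetoid K V)))

/-!
Pull `A` back along the Hopf map `S ⊆ ℂ^(m+1) → ℂP^m`. The closed hemisphere of `S` where the last
coordinate is real and nonnegative is a contractible ball mapping onto `ℂP^m`, so over it `A` has a
continuous eigenframe. The circle permutes the eigenvectors over the boundary of the ball up to
phases, and these phases form a cocycle, which is a character `a ↦ a ^ cᵢ` up to a coboundary.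
Rotating the normalized frame by the circle yields a continuous eigenframe `s` on all of `S` with
`s i (a • z) = a ^ cᵢ • s i z`.

It remains to see that `c = 0`, since then `s` descends to `ℂP^m`. The matrix `V` with columns `s i`
is unitary and its `i`-th column has weight `cᵢ`, so multiplication by `V` followed by orthogonal
projection onto the polynomials sends `⨁ᵢ P (k - cᵢ)` to `⨁ᵢ P k`, where `P d` is the space of
homogeneous polynomials of degree `d`. As `z̄ⱼ` maps polynomials of large degree almost into
polynomials, so does `V`, and the compression is injective for large `k`. The same holds for `Vᴴ`,
so `∑ᵢ dim P (k - cᵢ) = n dim P k` for all large `k`. Here `dim P d` is a polynomial in `d` of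
degree `m ≥ 2`, and this forces `c = 0`.
-/

open scoped InnerProductSpace

section SphereMeasure

open MeasureTheory Metric
open scoped Pointwise

theorem integral_volumeIoiPow_pow_mul_exp_neg_sq (n p : ℕ) :
    ∫ r : Set.Ioi (0 : ℝ), r.1 ^ p * Real.exp (-r.1 ^ 2) ∂(.volumeIoiPow n) =
      Real.Gamma ((n + p + 1) / 2) / 2 := by
  simp only [Measure.volumeIoiPow, ENNReal.ofReal]
  rw [integral_withDensity_eq_integral_smul (by fun_prop),
    integral_subtype_comap measurableSet_Ioi fun r : ℝ =>
      Real.toNNReal (r ^ n) • (r ^ p * Real.exp (-r ^ 2)),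
    setIntegral_congr_fun (g := fun r : ℝ => r ^ ((n + p : ℕ) : ℝ) * Real.exp (-r ^ (2 : ℝ)))
      measurableSet_Ioi fun r hr => ?_,
    integral_rpow_mul_exp_neg_rpow two_pos (neg_one_lt_zero.trans_le (Nat.cast_nonneg _))]
  · push_cast
    ring_nf
  · simp only [NNReal.smul_def, Real.coe_toNNReal _ (pow_nonneg (le_of_lt hr) _), smul_eq_mul,
      Real.rpow_natCast, Real.rpow_ofNat]
    ring

theorem integral_mul_exp_neg_sq_of_homogeneous {E : Type*} [NormedAddCommGroup E]
    [NormedSpace ℝ E] [FiniteDimensional ℝ E] [Nontrivial E] [MeasurableSpace E] [BorelSpace E]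
    (μ : Measure E) [μ.IsAddHaarMeasure] {f : E → ℝ} {p : ℕ}
    (hf : ∀ r > 0, ∀ x, f (r • x) = r ^ p * f x) :
    ∫ x, f x * Real.exp (-‖x‖ ^ 2) ∂μ =
      (∫ z : sphere (0 : E) 1, f z ∂μ.toSphere) *
        (Real.Gamma ((Module.finrank ℝ E + p) / 2) / 2) := by
  have hd : ((Module.finrank ℝ E - 1 : ℕ) : ℝ) + p + 1 = Module.finrank ℝ E + p := by
    rw [Nat.cast_sub Module.finrank_pos, Nat.cast_one]
    ring
  calc
    ∫ x, f x * Real.exp (-‖x‖ ^ 2) ∂μ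
        = ∫ x : ({0}ᶜ : Set E), f x.1 * Real.exp (-‖x.1‖ ^ 2) ∂(μ.comap (↑)) := by
      rw [integral_subtype_comap (measurableSet_singleton _).compl
        fun x => f x * Real.exp (-‖x‖ ^ 2), restrict_compl_singleton]
    _ = ∫ x, f x.1 * (x.2.1 ^ p * Real.exp (-x.2.1 ^ 2))
          ∂μ.toSphere.prod (.volumeIoiPow (Module.finrank ℝ E - 1)) := by
      rw [← μ.measurePreserving_homeomorphUnitSphereProd.integral_comp
        (Homeomorph.measurableEmbedding _)]
      refine integral_congr_ae (.of_forall fun x => ?_)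
      have hx : 0 < ‖x.1‖ := norm_pos_iff.mpr x.2
      simp only [homeomorphUnitSphereProd_apply_snd_coe, homeomorphUnitSphereProd_apply_fst_coe,
        hf _ (inv_pos.mpr hx)]
      rw [← mul_assoc, mul_right_comm _ (f x.1), ← mul_pow,
        inv_mul_cancel₀ hx.ne', one_pow, one_mul]
    _ = _ := by rw [integral_prod_mul (fun z : sphere (0 : E) 1 => f z)
        (fun r : Set.Ioi (0 : ℝ) => r.1 ^ p * Real.exp (-r.1 ^ 2)),
        integral_volumeIoiPow_pow_mul_exp_neg_sq, hd]

theorem measurePreserving_toSphere {E : Type*} [NormedAddCommGroup E] [NormedSpace ℝ E]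
    [MeasurableSpace E] [BorelSpace E] {μ : Measure E} (e : E ≃ₗᵢ[ℝ] E)
    (he : MeasurePreserving e μ μ) {g : sphere (0 : E) 1 → sphere (0 : E) 1}
    (hg : ∀ z, (g z : E) = e z) : MeasurePreserving g μ.toSphere μ.toSphere := by
  have hgc : Continuous g := by
    refine Continuous.subtype_mk (f := fun z => (g z : E)) ?_ fun z => (g z).2
    simp only [hg]
    fun_prop
  refine ⟨hgc.measurable, Measure.ext fun s hs => ?_⟩
  have hcone : e ⁻¹' (Set.Ioo (0 : ℝ) 1 • (Subtype.val '' s)) =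
      Set.Ioo (0 : ℝ) 1 • (Subtype.val '' (g ⁻¹' s)) := by
    ext x
    simp only [Set.mem_smul, Set.mem_image, Set.mem_preimage]
    constructor
    · rintro ⟨r, hr, _, ⟨z, hz, rfl⟩, hx⟩
      refine ⟨r, hr, _, ⟨⟨e.symm z, by simp⟩, ?_, rfl⟩, e.injective (by simpa using hx)⟩
      rwa [show g ⟨e.symm z, _⟩ = z from Subtype.ext (by simp [hg])]
    · rintro ⟨r, hr, _, ⟨z, hz, rfl⟩, rfl⟩
      exact ⟨r, hr, _, ⟨g z, hz, rfl⟩, by simp [hg]⟩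
  rw [Measure.map_apply hgc.measurable hs, Measure.toSphere_apply' _ (hgc.measurable hs),
    Measure.toSphere_apply' _ hs, ← hcone,
    he.measure_preimage_emb e.toHomeomorph.measurableEmbedding]

variable {ι : Type*} [Fintype ι]

theorem integral_prod_norm_pow_mul_exp_neg_sq (α : ι → ℕ) :
    ∫ z : ι → ℂ, ∏ i, (‖z i‖ ^ (2 * α i) * Real.exp (-‖z i‖ ^ 2)) =
      ∏ i, (Real.pi * (α i).factorial) := by
  rw [integral_fintype_prod_volume_eq_prod
    fun i (w : ℂ) => ‖w‖ ^ (2 * α i) * Real.exp (-‖w‖ ^ 2)]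
  refine Finset.prod_congr rfl fun i _ => ?_
  have h := Complex.integral_rpow_mul_exp_neg_rpow (p := 2) (q := (2 * α i : ℕ)) one_le_two
    (by linarith [Nat.cast_nonneg (α := ℝ) (2 * α i)])
  have hΓ : (((2 * α i : ℕ) : ℝ) + 2) / 2 = α i + 1 := by push_cast; ring
  simpa only [Real.rpow_natCast, Real.rpow_ofNat, hΓ, Real.Gamma_nat_eq_factorial,
    mul_div_cancel_left₀ Real.pi (two_ne_zero (α := ℝ))] using h

theorem exists_integral_sphere_prod_norm_pow [Nonempty ι] :
    ∃ c : ℝ, 0 < c ∧ ∀ α : ι → ℕ,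
      (∫ z : sphere (0 : EuclideanSpace ℂ ι) 1, ∏ i, ‖z.1 i‖ ^ (2 * α i)
        ∂(volume : Measure (EuclideanSpace ℂ ι)).toSphere) *
        Real.Gamma ((∑ i, α i + Fintype.card ι : ℕ) : ℝ) = c * ∏ i, ((α i).factorial : ℝ) := by
  let toPi := PiLp.continuousLinearEquiv 2 ℝ fun _ : ι => ℂ
  let ν : Measure (ι → ℂ) := (volume : Measure (EuclideanSpace ℂ ι)).map toPi
  have : ν.IsAddHaarMeasure := toPi.isAddHaarMeasure_map _
  let c := Measure.addHaarScalarFactor ν volume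
  have hν : ν = c • volume := Measure.isAddLeftInvariant_eq_smul _ _
  refine ⟨2 * (c * Real.pi ^ Fintype.card ι), ?_, fun α => ?_⟩
  · have := Measure.addHaarScalarFactor_pos_of_isAddHaarMeasure ν volume
    have : (0 : ℝ) < c := this
    positivity
  have hhom : ∀ r > (0 : ℝ), ∀ z : EuclideanSpace ℂ ι,
      ∏ i, ‖(r • z) i‖ ^ (2 * α i) = r ^ (2 * ∑ i, α i) * ∏ i, ‖z i‖ ^ (2 * α i) := by
    intro r hr z
    simp [mul_pow, Finset.prod_mul_distrib, Finset.prod_pow_eq_pow_sum, Finset.mul_sum,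
      abs_of_pos hr]
  have hpolar := integral_mul_exp_neg_sq_of_homogeneous
    (volume : Measure (EuclideanSpace ℂ ι)) (f := fun z => ∏ i, ‖z i‖ ^ (2 * α i)) hhom
  have hfin : ((Module.finrank ℝ (EuclideanSpace ℂ ι) : ℝ) + (2 * ∑ i, α i : ℕ)) / 2 =
      (∑ i, α i + Fintype.card ι : ℕ) := by
    rw [finrank_real_of_complex, finrank_euclideanSpace]
    push_cast
    ring
  have hprod : ∫ z : EuclideanSpace ℂ ι, (∏ i, ‖z i‖ ^ (2 * α i)) * Real.exp (-‖z‖ ^ 2) =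
      c * ∏ i, (Real.pi * (α i).factorial) := by
    rw [← integral_prod_norm_pow_mul_exp_neg_sq, ← smul_eq_mul, ← NNReal.smul_def,
      ← integral_smul_nnreal_measure, ← hν,
      show ν = .map toPi.toHomeomorph volume from rfl,
      toPi.toHomeomorph.measurableEmbedding.integral_map]
    simp [EuclideanSpace.norm_sq_eq, Finset.prod_mul_distrib, ← Real.exp_sum]
    rfl
  rw [hprod, hfin, Finset.prod_mul_distrib, Finset.prod_const, Finset.card_univ] at hpolar
  linarith

end SphereMeasure

section WeightSpaces

open MeasureTheory Metric

/-- The unit sphere of `ℂ^ι`. -/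
abbrev ComplexSphere (ι : Type*) [Fintype ι] : Type _ := sphere (0 : EuclideanSpace ℂ ι) 1

namespace ComplexSphere

variable {ι : Type*} [Fintype ι]

/-- The embedding of continuous functions on the sphere into `L²` of the surface measure. -/
noncomputable def toL2 : C(ComplexSphere ι, ℂ) →L[ℂ]
    Lp ℂ 2 (volume : Measure (EuclideanSpace ℂ ι)).toSphere :=
  ContinuousMap.toLp 2 _ ℂ

theorem inner_toL2 (f g : C(ComplexSphere ι, ℂ)) :
    ⟪toL2 f, toL2 g⟫_ℂ = ∫ z, g z * star (f z) ∂(volume : Measure _).toSphere :=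
  ContinuousMap.inner_toLp _ f g

theorem norm_sq_toL2 (f : C(ComplexSphere ι, ℂ)) :
    ‖toL2 f‖ ^ 2 = ∫ z, ‖f z‖ ^ 2 ∂(volume : Measure _).toSphere := by
  apply Complex.ofReal_injective
  rw [← integral_complex_ofReal, Complex.ofReal_pow]
  exact (inner_self_eq_norm_sq_to_K (𝕜 := ℂ) (toL2 f)).symm.trans
    ((inner_toL2 f f).trans (by simp [Complex.mul_conj']))

theorem norm_toL2_mul_le (f g : C(ComplexSphere ι, ℂ)) : ‖toL2 (f * g)‖ ≤ ‖f‖ * ‖toL2 g‖ := by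
  refine Lp.norm_le_mul_norm_of_ae_le_mul ?_
  filter_upwards [ContinuousMap.coeFn_toLp (p := 2) (𝕜 := ℂ) _ (f * g),
    ContinuousMap.coeFn_toLp (p := 2) (𝕜 := ℂ) _ g] with z hfg hg
  rw [toL2, hfg, hg, ContinuousMap.mul_apply, norm_mul]
  gcongr
  exact f.norm_coe_le_norm z

theorem toL2_injective : Function.Injective (toL2 (ι := ι)) :=
  ContinuousMap.toLp_injective _

/-- The diagonal unitary rotation `z ↦ (uᵢ zᵢ)ᵢ` of the sphere. -/
def torusRotation (u : ι → Circle) (z : ComplexSphere ι) : ComplexSphere ι :=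
  ⟨.toLp 2 fun i => u i * z.1 i, by
    have hz := norm_eq_of_mem_sphere z
    rw [EuclideanSpace.norm_eq] at hz
    simpa [EuclideanSpace.norm_eq, Circle.norm_coe] using hz⟩

@[simp]
theorem torusRotation_apply (u : ι → Circle) (z : ComplexSphere ι) (i : ι) :
    (torusRotation u z).1 i = u i * z.1 i := rfl

theorem integral_comp_torusRotation (u : ι → Circle) {f : ComplexSphere ι → ℂ}
    (hf : Continuous f) :
    ∫ z, f (torusRotation u z) ∂(volume : Measure _).toSphere =
      ∫ z, f z ∂(volume : Measure _).toSphere := by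
  let e : EuclideanSpace ℂ ι ≃ₗᵢ[ℝ] EuclideanSpace ℂ ι :=
    LinearIsometryEquiv.piLpCongrRight 2 fun i => rotation (u i)
  have he : MeasurePreserving (torusRotation u) (volume : Measure _).toSphere
      (volume : Measure _).toSphere :=
    measurePreserving_toSphere e e.measurePreserving fun z => rfl
  rw [← integral_map he.measurable.aemeasurable hf.aestronglyMeasurable, he.map_eq]

/-- The functions of weight `k` for the circle action `a • z = (a ^ wᵢ zᵢ)ᵢ`. The scalar action
is `w = 1`, the rotation of the `i`-th coordinate alone is `w = Pi.single i 1`. -/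
def weightSpace (w : ι → ℤ) (k : ℤ) : Submodule ℂ C(ComplexSphere ι, ℂ) where
  carrier := {f | ∀ (a : Circle) z, f (torusRotation (fun i => a ^ w i) z) = (a : ℂ) ^ k * f z}
  add_mem' hf hg a z := by simp only [ContinuousMap.add_apply, hf a z, hg a z, mul_add]
  zero_mem' a z := by simp
  smul_mem' c f hf a z := by
    simp only [ContinuousMap.smul_apply, hf a z, smul_eq_mul, mul_left_comm]

variable {w : ι → ℤ} {k l : ℤ} {f g : C(ComplexSphere ι, ℂ)}

theorem mul_mem_weightSpace (hf : f ∈ weightSpace w k) (hg : g ∈ weightSpace w l) :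
    f * g ∈ weightSpace w (k + l) := fun a z => by
  rw [ContinuousMap.mul_apply, hf a z, hg a z, zpow_add₀ a.coe_ne_zero, ContinuousMap.mul_apply]
  ring

theorem star_mem_weightSpace (hf : f ∈ weightSpace w k) : star f ∈ weightSpace w (-k) :=
  fun a z => by
    rw [ContinuousMap.star_apply, hf a z, star_mul', star_zpow₀, _root_.zpow_neg, ← _root_.inv_zpow,
      ← Circle.coe_inv, Circle.coe_inv_eq_conj, ContinuousMap.star_apply]
    rfl

theorem exists_circle_zpow_ne_one (hk : k ≠ 0) : ∃ a : Circle, (a : ℂ) ^ k ≠ 1 := by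
  refine ⟨Circle.exp (Real.pi / k), fun ha => ?_⟩
  have hπ : (k : ℝ) * (Real.pi / k) = Real.pi := mul_div_cancel₀ _ (by exact_mod_cast hk)
  rw [← Circle.coe_zpow, ← Circle.exp_intCast_mul, hπ, Circle.coe_eq_one] at ha
  exact Circle.exp_pi_ne_one ha

theorem integral_eq_zero_of_mem_weightSpace (hf : f ∈ weightSpace w k) (hk : k ≠ 0) :
    ∫ z, f z ∂(volume : Measure _).toSphere = 0 := by
  obtain ⟨a, ha⟩ := exists_circle_zpow_ne_one hk
  have h := integral_comp_torusRotation (fun i => a ^ w i) f.continuous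
  simp only [hf a] at h
  rw [integral_const_mul] at h
  exact (mul_left_eq_self₀.mp h).resolve_left ha

theorem inner_toL2_eq_zero_of_mem_weightSpace (hf : f ∈ weightSpace w k)
    (hg : g ∈ weightSpace w l) (hkl : k ≠ l) : ⟪toL2 f, toL2 g⟫_ℂ = 0 :=
  (inner_toL2 f g).trans <| integral_eq_zero_of_mem_weightSpace
    (mul_mem_weightSpace hg (star_mem_weightSpace hf)) (by omega)

end ComplexSphere

end WeightSpaces

theorem norm_sq_sum_of_pairwise_inner_eq_zero {𝕜 E κ : Type*} [RCLike 𝕜]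
    [SeminormedAddCommGroup E] [InnerProductSpace 𝕜 E] (s : Finset κ) {v : κ → E}
    (hv : Pairwise fun i j => inner 𝕜 (v i) (v j) = 0) :
    ‖∑ i ∈ s, v i‖ ^ 2 = ∑ i ∈ s, ‖v i‖ ^ 2 := by
  classical
  have hdiag : inner 𝕜 (∑ i ∈ s, v i) (∑ i ∈ s, v i) = ∑ i ∈ s, inner 𝕜 (v i) (v i) := by
    rw [sum_inner]
    refine Finset.sum_congr rfl fun i hi => ?_
    rw [inner_sum, Finset.sum_eq_single_of_mem i hi fun j _ hji => hv hji.symm]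
  rw [← inner_self_eq_norm_sq (𝕜 := 𝕜), hdiag, map_sum]
  exact Finset.sum_congr rfl fun i _ => inner_self_eq_norm_sq _

theorem eq_zero_or_exists_eq_add_single {ι : Type*} [DecidableEq ι] (α : ι → ℕ) (j : ι) :
    α j = 0 ∨ ∃ β : ι → ℕ, α = β + Pi.single j 1 := by
  refine or_iff_not_imp_left.mpr fun h => ⟨α - Pi.single j 1, (tsub_add_cancel_of_le ?_).symm⟩
  intro i
  obtain rfl | hi := eq_or_ne i j
  · simpa [Nat.one_le_iff_ne_zero] using h
  · simp [hi]

section Monomials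

open MeasureTheory Metric

namespace ComplexSphere

variable {ι : Type*} [Fintype ι]

/-- The coordinate function `zⱼ` on the sphere. -/
def coord (j : ι) : C(ComplexSphere ι, ℂ) :=
  ⟨fun z => z.1 j, by fun_prop⟩

@[simp]
theorem coord_apply (j : ι) (z : ComplexSphere ι) : coord j z = z.1 j := rfl

/-- The monomial function `z ^ α` on the sphere. -/
noncomputable def monomial (α : ι → ℕ) : C(ComplexSphere ι, ℂ) := ∏ i, coord i ^ α i

theorem monomial_apply (α : ι → ℕ) (z : ComplexSphere ι) : monomial α z = ∏ i, z.1 i ^ α i := by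
  simp [monomial, ContinuousMap.coe_prod]

theorem coord_mem_weightSpace (w : ι → ℤ) (j : ι) : coord j ∈ weightSpace w (w j) :=
  fun a z => by simp

theorem monomial_mem_weightSpace (w : ι → ℤ) (α : ι → ℕ) :
    monomial α ∈ weightSpace w (∑ i, w i * α i) := fun a z => by
  have h : (a : ℂ) ^ (∑ i, w i * α i) = ∏ i, ((a ^ w i : Circle) : ℂ) ^ α i := by
    induction (Finset.univ : Finset ι) using Finset.cons_induction with
    | empty => simp
    | cons i s hi ih =>
      rw [Finset.sum_cons, Finset.prod_cons, zpow_add₀ a.coe_ne_zero, ih, _root_.zpow_mul,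
        zpow_natCast, Circle.coe_zpow]
  simp only [monomial_apply, torusRotation_apply, mul_pow, Finset.prod_mul_distrib, h]

theorem inner_toL2_eq_zero_of_mem_weightSpace_single {α β : ι → ℤ} (hαβ : α ≠ β)
    {f g : C(ComplexSphere ι, ℂ)} (hf : ∀ w, f ∈ weightSpace w (∑ i, w i * α i))
    (hg : ∀ w, g ∈ weightSpace w (∑ i, w i * β i)) : ⟪toL2 f, toL2 g⟫_ℂ = 0 := by
  classical
  obtain ⟨i, hi⟩ := Function.ne_iff.mp hαβ
  refine inner_toL2_eq_zero_of_mem_weightSpace (hf (Pi.single i 1)) (hg (Pi.single i 1)) ?_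
  simpa [Pi.single_apply] using hi

theorem pairwise_inner_toL2_monomial :
    Pairwise fun α β : ι → ℕ => ⟪toL2 (monomial α), toL2 (monomial β)⟫_ℂ = 0 := fun α β hαβ =>
  inner_toL2_eq_zero_of_mem_weightSpace_single (α := fun i => α i) (β := fun i => β i)
    (fun h => hαβ (funext fun i => Int.ofNat_inj.mp (congrFun h i)))
    (fun w => monomial_mem_weightSpace w α) fun w => monomial_mem_weightSpace w β

theorem norm_sq_toL2_monomial (α : ι → ℕ) : ‖toL2 (monomial α)‖ ^ 2 =
    ∫ z : ComplexSphere ι, ∏ i, ‖z.1 i‖ ^ (2 * α i) ∂(volume : Measure _).toSphere := by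
  simp only [norm_sq_toL2, monomial_apply, norm_prod, norm_pow, ← Finset.prod_pow, ← pow_mul,
    mul_comm]

theorem norm_sq_toL2_monomial_pos [Nonempty ι] (α : ι → ℕ) : 0 < ‖toL2 (monomial α)‖ ^ 2 := by
  obtain ⟨c, hc, h⟩ := exists_integral_sphere_prod_norm_pow (ι := ι)
  have hΓ : 0 < Real.Gamma ((∑ i, α i + Fintype.card ι : ℕ) : ℝ) :=
    Real.Gamma_pos_of_pos (by exact_mod_cast Nat.add_pos_right _ Fintype.card_pos)
  rw [norm_sq_toL2_monomial]
  refine pos_of_mul_pos_left ?_ hΓ.le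
  rw [h]
  positivity

variable [DecidableEq ι]

theorem monomial_add_single (α : ι → ℕ) (j : ι) :
    monomial (α + Pi.single j 1) = coord j * monomial α := by
  have h : ∏ i, (coord i : C(ComplexSphere ι, ℂ)) ^ (Pi.single j 1 : ι → ℕ) i = coord j := by
    rw [Finset.prod_eq_single j (fun i _ hij => by simp [hij]) (by simp)]
    simp
  simp only [monomial, Pi.add_apply, pow_add, Finset.prod_mul_distrib, h, mul_comm]

theorem sum_add_single (α : ι → ℕ) (j : ι) :
    ∑ i, (α + Pi.single j 1 : ι → ℕ) i = ∑ i, α i + 1 := by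
  simp [Finset.sum_add_distrib]

theorem norm_sq_toL2_monomial_add_single (α : ι → ℕ) (j : ι) :
    (∑ i, α i + Fintype.card ι : ℝ) * ‖toL2 (monomial (α + Pi.single j 1))‖ ^ 2 =
      (α j + 1) * ‖toL2 (monomial α)‖ ^ 2 := by
  have : Nonempty ι := ⟨j⟩
  obtain ⟨c, _, h⟩ := exists_integral_sphere_prod_norm_pow (ι := ι)
  simp only [← norm_sq_toL2_monomial] at h
  have hd : (0 : ℝ) < (∑ i, α i + Fintype.card ι : ℕ) := by
    exact_mod_cast Nat.add_pos_right _ Fintype.card_pos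
  have hfac : ∏ i, (((α + Pi.single j 1 : ι → ℕ) i).factorial : ℝ) =
      (α j + 1) * ∏ i, ((α i).factorial : ℝ) := by
    rw [← Finset.mul_prod_erase _ _ (Finset.mem_univ j),
      ← Finset.mul_prod_erase _ _ (Finset.mem_univ j), ← mul_assoc]
    congr 1
    · simp [Nat.factorial_succ]
    · exact Finset.prod_congr rfl fun i hi => by simp [Finset.ne_of_mem_erase hi]
  have h₁ := h (α + Pi.single j 1)
  rw [hfac, sum_add_single, add_right_comm, Nat.cast_add_one, Real.Gamma_add_one hd.ne'] at h₁
  refine mul_right_cancel₀ (Real.Gamma_pos_of_pos hd).ne' ?_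
  push_cast at h₁ h ⊢
  linear_combination h₁ - (α j + 1) * h α

/-- The multiple of `z ^ (α - eⱼ)` closest to `z̄ⱼ z ^ α`, where `eⱼ` is the `j`-th unit vector. -/
noncomputable def conjCoordApprox (j : ι) (α : ι → ℕ) : C(ComplexSphere ι, ℂ) :=
  (α j / (∑ i, α i + Fintype.card ι - 1) : ℂ) • monomial (α - Pi.single j 1)

theorem conjCoordApprox_add_single (j : ι) (β : ι → ℕ) :
    conjCoordApprox j (β + Pi.single j 1) =
      ((β j + 1) / (∑ i, β i + Fintype.card ι) : ℂ) • monomial β := by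
  rw [conjCoordApprox, add_tsub_cancel_right]
  congr 2
  · simp
  · push_cast [← Nat.cast_sum, sum_add_single]
    ring

theorem conjCoordApprox_eq_zero {j : ι} {α : ι → ℕ} (h : α j = 0) : conjCoordApprox j α = 0 := by
  rw [conjCoordApprox, h, Nat.cast_zero, zero_div]
  exact zero_smul ℂ (monomial _)

theorem star_coord_mul_monomial_sub_mem_weightSpace (j : ι) (α : ι → ℕ) (w : ι → ℤ) :
    star (coord j) * monomial α - conjCoordApprox j α ∈
      weightSpace w (∑ i, w i * (α i - (Pi.single j 1 : ι → ℤ) i)) := by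
  have hsum : ∑ i, w i * (α i - (Pi.single j 1 : ι → ℤ) i) = -w j + ∑ i, w i * α i := by
    simp only [mul_sub, Finset.sum_sub_distrib, Pi.single_apply, mul_ite, mul_one, mul_zero,
      Finset.sum_ite_eq', Finset.mem_univ, if_true]
    ring
  rw [hsum]
  refine sub_mem (mul_mem_weightSpace (star_mem_weightSpace (coord_mem_weightSpace w j))
    (monomial_mem_weightSpace w α)) ?_
  obtain h | ⟨β, rfl⟩ := eq_zero_or_exists_eq_add_single α j
  · rw [conjCoordApprox_eq_zero h]
    exact zero_mem _
  · have hβ : -w j + ∑ i, w i * ((β + Pi.single j 1 : ι → ℕ) i : ℤ) = ∑ i, w i * β i := by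
      simp [mul_add, Finset.sum_add_distrib, Pi.single_apply]
    rw [conjCoordApprox_add_single, hβ]
    exact Submodule.smul_mem _ _ (monomial_mem_weightSpace w β)

theorem norm_toL2_star_coord_mul_monomial (j : ι) (α : ι → ℕ) :
    ‖toL2 (star (coord j) * monomial α)‖ ^ 2 = ‖toL2 (monomial (α + Pi.single j 1))‖ ^ 2 := by
  simp [norm_sq_toL2, monomial_add_single]

theorem inner_toL2_star_coord_mul_monomial (j : ι) (β : ι → ℕ) :
    ⟪toL2 (star (coord j) * monomial (β + Pi.single j 1)), toL2 (monomial β)⟫_ℂ =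
      (‖toL2 (monomial (β + Pi.single j 1))‖ ^ 2 : ℝ) := by
  rw [Complex.ofReal_pow, ← RCLike.ofReal_eq_complex_ofReal, ← inner_self_eq_norm_sq_to_K (𝕜 := ℂ),
    inner_toL2, inner_toL2]
  congr 1 with z
  simp [monomial_add_single]
  ring

theorem norm_sq_toL2_star_coord_mul_monomial_add_single_sub (j : ι) (β : ι → ℕ) :
    ‖toL2 (star (coord j) * monomial (β + Pi.single j 1) -
      conjCoordApprox j (β + Pi.single j 1))‖ ^ 2 =
        ‖toL2 (monomial (β + Pi.single j 1 + Pi.single j 1))‖ ^ 2 -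
          (β j + 1) / (∑ i, β i + Fintype.card ι) * ‖toL2 (monomial (β + Pi.single j 1))‖ ^ 2 := by
  have hcard : (0 : ℝ) < Fintype.card ι := by exact_mod_cast Fintype.card_pos_iff.mpr ⟨j⟩
  have hβ := norm_sq_toL2_monomial_add_single β j
  set ρ : ℝ := (β j + 1) / (∑ i, β i + Fintype.card ι) with hρ
  have hcoe : ((β j + 1) / (∑ i, β i + Fintype.card ι) : ℂ) = ρ := by simp [hρ]
  have hβ' : ‖toL2 (monomial (β + Pi.single j 1))‖ ^ 2 = ρ * ‖toL2 (monomial β)‖ ^ 2 := by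
    rw [hρ, div_mul_eq_mul_div, eq_div_iff (by positivity), mul_comm, hβ]
  rw [conjCoordApprox_add_single, hcoe, map_sub, map_smul, norm_sub_sq (𝕜 := ℂ),
    inner_smul_right, inner_toL2_star_coord_mul_monomial, norm_toL2_star_coord_mul_monomial,
    norm_smul, mul_pow, Complex.norm_real, Real.norm_eq_abs, sq_abs]
  simp only [← Complex.ofReal_mul, RCLike.re_eq_complex_re, Complex.ofReal_re]
  linear_combination -ρ * hβ'

theorem norm_sq_toL2_star_coord_mul_monomial_sub_le (j : ι) (α : ι → ℕ) :
    ‖toL2 (star (coord j) * monomial α - conjCoordApprox j α)‖ ^ 2 ≤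
      (∑ i, α i + Fintype.card ι : ℝ)⁻¹ * ‖toL2 (monomial α)‖ ^ 2 := by
  have hcard : (0 : ℝ) < Fintype.card ι := by exact_mod_cast Fintype.card_pos_iff.mpr ⟨j⟩
  have hα := norm_sq_toL2_monomial_add_single α j
  rw [inv_mul_eq_div, le_div_iff₀ (by positivity)]
  obtain h | ⟨β, rfl⟩ := eq_zero_or_exists_eq_add_single α j
  · rw [conjCoordApprox_eq_zero h, sub_zero, norm_toL2_star_coord_mul_monomial]
    rw [h, Nat.cast_zero] at hα
    linarith
  · rw [norm_sq_toL2_star_coord_mul_monomial_add_single_sub]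
    rw [sum_add_single, Pi.add_apply, Pi.single_eq_same] at hα
    rw [sum_add_single]
    set t : ℝ := ∑ i, β i + Fintype.card ι with ht
    set ρ : ℝ := (β j + 1) / t with hρ
    set N := ‖toL2 (monomial (β + Pi.single j 1))‖ ^ 2
    have hρt : (t + 1) * ρ = β j + 1 + ρ := by
      rw [add_one_mul, hρ, mul_div_cancel₀ _ (by positivity)]
    have hρN : 0 ≤ ρ * N := by positivity
    push_cast at hα ⊢
    rw [add_right_comm _ (1 : ℝ), ← Nat.cast_sum, ← ht] at hα ⊢
    linear_combination hα - N * hρt + hρN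

end ComplexSphere

end Monomials

section AsymptoticMultipliers

namespace ComplexSphere

variable {ι : Type*} [Fintype ι]

/-- The restrictions to the sphere of the holomorphic polynomials all of whose terms have degree
at least `K`. -/
noncomputable def polynomialTail (ι : Type*) [Fintype ι] (K : ℕ) :
    Submodule ℂ C(ComplexSphere ι, ℂ) :=
  Submodule.span ℂ (monomial '' {α | K ≤ ∑ i, α i})

theorem monomial_mem_polynomialTail {α : ι → ℕ} {K : ℕ} (hα : K ≤ ∑ i, α i) :
    monomial α ∈ polynomialTail ι K :=
  Submodule.subset_span ⟨α, hα, rfl⟩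

theorem polynomialTail_antitone : Antitone (polynomialTail ι) := fun _ _ h =>
  Submodule.span_mono (Set.image_mono fun _ hα => h.trans hα)

theorem coord_mul_mem_polynomialTail (j : ι) {K : ℕ} {f : C(ComplexSphere ι, ℂ)}
    (hf : f ∈ polynomialTail ι K) : coord j * f ∈ polynomialTail ι K := by
  classical
  suffices polynomialTail ι K ≤ (polynomialTail ι K).comap (LinearMap.mulLeft ℂ (coord j)) from
    this hf
  refine Submodule.span_le.mpr ?_
  rintro _ ⟨α, hα, rfl⟩
  change coord j * monomial α ∈ polynomialTail ι K
  rw [← monomial_add_single]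
  exact monomial_mem_polynomialTail (by rw [sum_add_single]; exact le_add_right hα)

theorem conjCoordApprox_mem_polynomialTail [DecidableEq ι] (j : ι) {α : ι → ℕ} {K : ℕ}
    (hα : K ≤ ∑ i, α i) : conjCoordApprox j α ∈ polynomialTail ι (K - 1) := by
  obtain h | ⟨β, rfl⟩ := eq_zero_or_exists_eq_add_single α j
  · rw [conjCoordApprox_eq_zero h]
    exact zero_mem _
  · rw [sum_add_single] at hα
    rw [conjCoordApprox_add_single]
    exact Submodule.smul_mem _ _ (monomial_mem_polynomialTail (by omega))

theorem pairwise_inner_toL2_star_coord_mul_monomial_sub [DecidableEq ι] (j : ι) :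
    Pairwise fun α β : ι → ℕ => ⟪toL2 (star (coord j) * monomial α - conjCoordApprox j α),
      toL2 (star (coord j) * monomial β - conjCoordApprox j β)⟫_ℂ = 0 := fun α β hαβ =>
  inner_toL2_eq_zero_of_mem_weightSpace_single
    (fun h => hαβ (funext fun i => by simpa using congrFun h i))
    (star_coord_mul_monomial_sub_mem_weightSpace j α)
    (star_coord_mul_monomial_sub_mem_weightSpace j β)

theorem norm_sq_toL2_sum_smul {κ : Type*} {v : κ → C(ComplexSphere ι, ℂ)}
    (hv : Pairwise fun a b => ⟪toL2 (v a), toL2 (v b)⟫_ℂ = 0) (s : Finset κ) (c : κ → ℂ) :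
    ‖toL2 (∑ a ∈ s, c a • v a)‖ ^ 2 = ∑ a ∈ s, ‖c a‖ ^ 2 * ‖toL2 (v a)‖ ^ 2 := by
  simp_rw [map_sum, map_smul, ← mul_pow, ← norm_smul]
  refine norm_sq_sum_of_pairwise_inner_eq_zero (𝕜 := ℂ) s fun a b hab => ?_
  dsimp only
  rw [inner_smul_left, inner_smul_right, hv hab, mul_zero, mul_zero]

/-- The Hankel operator of `z̄ⱼ` has norm at most `(K + d) ^ (-1/2)` on polynomials of degree at
least `K`, where `d` is the dimension. -/
theorem exists_mem_polynomialTail_norm_sq_star_coord_mul_sub_le (j : ι) {K : ℕ}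
    {f : C(ComplexSphere ι, ℂ)} (hf : f ∈ polynomialTail ι K) :
    ∃ g ∈ polynomialTail ι (K - 1),
      ‖toL2 (star (coord j) * f - g)‖ ^ 2 ≤ (K + Fintype.card ι : ℝ)⁻¹ * ‖toL2 f‖ ^ 2 := by
  classical
  have hcard : (0 : ℝ) < Fintype.card ι := by exact_mod_cast Fintype.card_pos_iff.mpr ⟨j⟩
  obtain ⟨c, hc, rfl⟩ := (Finsupp.mem_span_image_iff_linearCombination ℂ).mp hf
  have hK : ∀ α ∈ c.support, K ≤ ∑ i, α i := fun α hα => (Finsupp.mem_supported ℂ c).mp hc hα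
  refine ⟨∑ α ∈ c.support, c α • conjCoordApprox j α, sum_mem fun α hα =>
    Submodule.smul_mem _ _ (conjCoordApprox_mem_polynomialTail j (hK α hα)), ?_⟩
  have hsub : star (coord j) * Finsupp.linearCombination ℂ monomial c -
      ∑ α ∈ c.support, c α • conjCoordApprox j α =
        ∑ α ∈ c.support, c α • (star (coord j) * monomial α - conjCoordApprox j α) := by
    simp only [Finsupp.linearCombination_apply, Finsupp.sum, Finset.mul_sum, smul_sub,
      Finset.sum_sub_distrib, mul_smul_comm]
  rw [hsub, norm_sq_toL2_sum_smul (pairwise_inner_toL2_star_coord_mul_monomial_sub j),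
    Finsupp.linearCombination_apply, Finsupp.sum,
    norm_sq_toL2_sum_smul pairwise_inner_toL2_monomial, Finset.mul_sum]
  refine Finset.sum_le_sum fun α hα => ?_
  rw [mul_left_comm]
  gcongr
  refine (norm_sq_toL2_star_coord_mul_monomial_sub_le j α).trans ?_
  gcongr
  exact hK α hα

/-- The functions `s` such that multiplication by `s` maps polynomials of large degree to functions
which are, relative to their `L²` norm, arbitrarily close to polynomials of large degree. -/
noncomputable def asymptoticMultipliers (ι : Type*) [Fintype ι] :
    Subalgebra ℂ C(ComplexSphere ι, ℂ) where
  carrier := {s | ∀ ε > 0, ∀ M, ∃ K, ∀ f ∈ polynomialTail ι K, ∃ g ∈ polynomialTail ι M,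
    ‖toL2 (s * f - g)‖ ≤ ε * ‖toL2 f‖}
  algebraMap_mem' c ε hε M := by
    refine ⟨M, fun f hf => ⟨c • f, Submodule.smul_mem _ _ hf, ?_⟩⟩
    rw [sub_eq_zero.mpr (Algebra.smul_def c f).symm, map_zero, norm_zero]
    positivity
  add_mem' {s t} hs ht ε hε M := by
    obtain ⟨K₁, h₁⟩ := hs (ε / 2) (by positivity) M
    obtain ⟨K₂, h₂⟩ := ht (ε / 2) (by positivity) M
    refine ⟨max K₁ K₂, fun f hf => ?_⟩
    obtain ⟨g₁, hg₁, e₁⟩ := h₁ f (polynomialTail_antitone (le_max_left _ _) hf)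
    obtain ⟨g₂, hg₂, e₂⟩ := h₂ f (polynomialTail_antitone (le_max_right _ _) hf)
    refine ⟨g₁ + g₂, add_mem hg₁ hg₂, ?_⟩
    rw [add_mul, add_sub_add_comm, map_add]
    linarith [norm_add_le (toL2 (s * f - g₁)) (toL2 (t * f - g₂))]
  mul_mem' {s t} hs ht ε hε M := by
    obtain ⟨δ, hδ, hδ₁, hδε⟩ : ∃ δ > 0, δ ≤ 1 ∧ δ * (‖s‖ + ‖t‖ + 1) ≤ ε :=
      ⟨min 1 (ε / (‖s‖ + ‖t‖ + 1)), by positivity, min_le_left _ _,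
        (le_div_iff₀ (by positivity)).mp (min_le_right _ _)⟩
    obtain ⟨K₁, h₁⟩ := hs δ hδ M
    obtain ⟨K₂, h₂⟩ := ht δ hδ K₁
    refine ⟨K₂, fun f hf => ?_⟩
    obtain ⟨g, hg, hgf⟩ := h₂ f hf
    obtain ⟨k, hk, hkg⟩ := h₁ g hg
    refine ⟨k, hk, ?_⟩
    have hg' : ‖toL2 g‖ ≤ (‖t‖ + 1) * ‖toL2 f‖ := by
      have h := norm_sub_le (toL2 (t * f)) (toL2 (t * f - g))
      rw [← map_sub, sub_sub_cancel] at h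
      linarith [norm_toL2_mul_le t f, mul_le_mul_of_nonneg_right hδ₁ (norm_nonneg (toL2 f))]
    calc ‖toL2 (s * t * f - k)‖ = ‖toL2 (s * (t * f - g)) + toL2 (s * g - k)‖ := by
          rw [← map_add]; congr 2; ring
      _ ≤ ‖s‖ * (δ * ‖toL2 f‖) + δ * ((‖t‖ + 1) * ‖toL2 f‖) := by
          refine norm_add_le_of_le ((norm_toL2_mul_le _ _).trans ?_) (hkg.trans ?_) <;> gcongr
      _ = δ * (‖s‖ + ‖t‖ + 1) * ‖toL2 f‖ := by ring
      _ ≤ ε * ‖toL2 f‖ := by gcongr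

theorem isClosed_asymptoticMultipliers :
    IsClosed (asymptoticMultipliers ι : Set C(ComplexSphere ι, ℂ)) := by
  refine isClosed_of_closure_subset fun s hs ε hε M => ?_
  obtain ⟨t, ht, hst⟩ := Metric.mem_closure_iff.mp hs (ε / 2) (by positivity)
  obtain ⟨K, hK⟩ := ht (ε / 2) (by positivity) M
  refine ⟨K, fun f hf => ?_⟩
  obtain ⟨g, hg, hgf⟩ := hK f hf
  refine ⟨g, hg, ?_⟩
  rw [dist_eq_norm] at hst
  calc ‖toL2 (s * f - g)‖ = ‖toL2 ((s - t) * f) + toL2 (t * f - g)‖ := by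
        rw [← map_add]; congr 2; ring
    _ ≤ ε / 2 * ‖toL2 f‖ + ε / 2 * ‖toL2 f‖ := by
        refine norm_add_le_of_le ((norm_toL2_mul_le _ _).trans ?_) hgf
        gcongr
    _ = ε * ‖toL2 f‖ := by ring

theorem coord_mem_asymptoticMultipliers (j : ι) : coord j ∈ asymptoticMultipliers ι :=
  fun ε hε M => ⟨M, fun f hf => ⟨coord j * f, coord_mul_mem_polynomialTail j hf, by
    rw [sub_self, map_zero, norm_zero]
    positivity⟩⟩

theorem star_coord_mem_asymptoticMultipliers (j : ι) :
    star (coord j) ∈ asymptoticMultipliers ι := by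
  intro ε hε M
  obtain ⟨n, hn⟩ := exists_nat_gt (ε ^ 2)⁻¹
  refine ⟨max n (M + 1), fun f hf => ?_⟩
  obtain ⟨g, hg, h⟩ := exists_mem_polynomialTail_norm_sq_star_coord_mul_sub_le j hf
  refine ⟨g, polynomialTail_antitone (by omega) hg,
    (sq_le_sq₀ (norm_nonneg _) (by positivity)).mp (h.trans ?_)⟩
  rw [mul_pow]
  gcongr
  refine inv_le_of_inv_le₀ (by positivity) (hn.le.trans ?_)
  have : (n : ℝ) ≤ (max n (M + 1) : ℕ) := by exact_mod_cast le_max_left _ _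
  linarith [(Fintype.card ι).cast_nonneg (α := ℝ)]

theorem asymptoticMultipliers_eq_top : asymptoticMultipliers ι = ⊤ := by
  let P : StarSubalgebra ℂ C(ComplexSphere ι, ℂ) := StarAlgebra.adjoin ℂ (Set.range coord)
  have hclosure : P.topologicalClosure = ⊤ := by
    refine ContinuousMap.starSubalgebra_topologicalClosure_eq_top_of_separatesPoints _ ?_
    intro x y hxy
    obtain ⟨i, hi⟩ : ∃ i, x.1 i ≠ y.1 i := by
      by_contra! h
      exact hxy (Subtype.ext (PiLp.ext h))
    exact ⟨coord i, ⟨coord i, StarAlgebra.subset_adjoin ℂ _ ⟨i, rfl⟩, rfl⟩, hi⟩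
  have hle : P.toSubalgebra ≤ asymptoticMultipliers ι := by
    refine Algebra.adjoin_le ?_
    rintro s (⟨j, rfl⟩ | ⟨j, hj⟩)
    · exact coord_mem_asymptoticMultipliers j
    · rw [← star_star s, ← hj]
      exact star_coord_mem_asymptoticMultipliers j
  refine eq_top_iff.mpr fun s _ => closure_minimal hle isClosed_asymptoticMultipliers ?_
  have hs : s ∈ P.topologicalClosure := hclosure ▸ trivial
  exact hs

end ComplexSphere

end AsymptoticMultipliers

section DimensionCount

open MeasureTheory

namespace ComplexSphere

variable {ι κ κ' : Type*} [Fintype ι] [Fintype κ]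

theorem sum_norm_sq_toL2 (f : κ → C(ComplexSphere ι, ℂ)) :
    ((∑ i, ‖toL2 (f i)‖ ^ 2 : ℝ) : ℂ) = ∫ z, (star f ⬝ᵥ f) z ∂(volume : Measure _).toSphere := by
  simp_rw [dotProduct, ContinuousMap.coe_sum, Finset.sum_apply]
  rw [Complex.ofReal_sum, integral_finsetSum _ fun i _ =>
    (map_continuous (star f i * f i)).integrable_of_hasCompactSupport (.of_compactSpace _)]
  refine Finset.sum_congr rfl fun i _ => ?_
  rw [norm_sq_toL2, ← integral_complex_ofReal]
  simp [Complex.conj_mul']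

theorem sum_norm_sq_toL2_mulVec [Fintype κ'] [DecidableEq κ]
    {V : Matrix κ' κ C(ComplexSphere ι, ℂ)} (hV : Vᴴ * V = 1)
    (f : κ → C(ComplexSphere ι, ℂ)) :
    ∑ l, ‖toL2 ((V *ᵥ f) l)‖ ^ 2 = ∑ i, ‖toL2 (f i)‖ ^ 2 := by
  apply Complex.ofReal_injective
  rw [sum_norm_sq_toL2, sum_norm_sq_toL2, star_mulVec, ← dotProduct_mulVec, mulVec_mulVec, hV,
    one_mulVec]

theorem exists_mem_polynomialTail_norm_toL2_mulVec_sub_le [Finite κ']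
    (V : Matrix κ' κ C(ComplexSphere ι, ℂ)) {ε : ℝ} (hε : 0 < ε) :
    ∃ K, ∀ f : κ → C(ComplexSphere ι, ℂ), (∀ i, f i ∈ polynomialTail ι K) → ∀ l,
      ∃ g ∈ polynomialTail ι 0, ‖toL2 ((V *ᵥ f) l - g)‖ ≤ ε * ∑ i, ‖toL2 (f i)‖ := by
  have hmem : ∀ l i, V l i ∈ asymptoticMultipliers ι := fun l i => by
    rw [asymptoticMultipliers_eq_top]
    exact Algebra.mem_top
  choose K hK using fun l i => hmem l i ε hε 0
  obtain ⟨K', hK'⟩ := Finite.exists_le fun p : κ' × κ => K p.1 p.2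
  refine ⟨K', fun f hf l => ?_⟩
  choose g hg hgf using fun i => hK l i (f i) (polynomialTail_antitone (hK' (l, i)) (hf i))
  refine ⟨∑ i, g i, sum_mem fun i _ => hg i, ?_⟩
  rw [mulVec, dotProduct, ← Finset.sum_sub_distrib, map_sum, Finset.mul_sum]
  exact norm_sum_le_of_le _ fun i _ => hgf i

/-- If `V` is an isometry then compressing it to the polynomials is injective in large degrees. -/
theorem exists_eq_zero_of_inner_toL2_mulVec_eq_zero [Fintype κ'] [DecidableEq κ]
    {V : Matrix κ' κ C(ComplexSphere ι, ℂ)} (hV : Vᴴ * V = 1) :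
    ∃ K, ∀ f : κ → C(ComplexSphere ι, ℂ), (∀ i, f i ∈ polynomialTail ι K) →
      (∀ l, ∀ g ∈ polynomialTail ι 0, ⟪toL2 g, toL2 ((V *ᵥ f) l)⟫_ℂ = 0) → f = 0 := by
  set c : ℝ := Fintype.card κ' * Fintype.card κ with hc
  have hc₀ : 0 ≤ c := by positivity
  obtain ⟨K, hK⟩ := exists_mem_polynomialTail_norm_toL2_mulVec_sub_le V
    (ε := (c + 1)⁻¹) (by positivity)
  refine ⟨K, fun f hf horth => ?_⟩
  set N := ∑ i, ‖toL2 (f i)‖ ^ 2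
  have hle : ∀ l, ‖toL2 ((V *ᵥ f) l)‖ ^ 2 ≤ ((c + 1)⁻¹) ^ 2 * (Fintype.card κ * N) := by
    intro l
    obtain ⟨g, hg, hgf⟩ := hK f hf l
    have hpyth : ‖toL2 ((V *ᵥ f) l - g)‖ ^ 2 = ‖toL2 ((V *ᵥ f) l)‖ ^ 2 + ‖toL2 g‖ ^ 2 := by
      rw [map_sub, norm_sub_sq (𝕜 := ℂ), inner_eq_zero_symm.mp (horth l g hg)]
      simp
    calc ‖toL2 ((V *ᵥ f) l)‖ ^ 2 ≤ ‖toL2 ((V *ᵥ f) l - g)‖ ^ 2 := by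
          rw [hpyth]
          exact le_add_of_nonneg_right (sq_nonneg _)
      _ ≤ ((c + 1)⁻¹ * ∑ i, ‖toL2 (f i)‖) ^ 2 := by gcongr
      _ = ((c + 1)⁻¹) ^ 2 * (∑ i, ‖toL2 (f i)‖) ^ 2 := mul_pow _ _ _
      _ ≤ ((c + 1)⁻¹) ^ 2 * (Fintype.card κ * N) := by
          gcongr
          exact sq_sum_le_card_mul_sum_sq
  have hNle : N ≤ c / (c + 1) ^ 2 * N := by
    calc N = ∑ l, ‖toL2 ((V *ᵥ f) l)‖ ^ 2 := (sum_norm_sq_toL2_mulVec hV f).symm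
      _ ≤ Fintype.card κ' • (((c + 1)⁻¹) ^ 2 * (Fintype.card κ * N)) :=
          Finset.sum_le_card_nsmul _ _ _ fun l _ => hle l
      _ = c / (c + 1) ^ 2 * N := by
          rw [nsmul_eq_mul, inv_pow, div_eq_mul_inv]
          linear_combination -((c + 1) ^ 2)⁻¹ * N * hc
  have hlt : c / (c + 1) ^ 2 < 1 := (div_lt_one (by positivity)).mpr (by nlinarith)
  have hN₀ : N = 0 := by
    have : 0 ≤ N := by positivity
    nlinarith
  funext i
  have hi := (Finset.sum_eq_zero_iff_of_nonneg fun i _ => sq_nonneg _).mp hN₀ i (Finset.mem_univ i)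
  exact toL2_injective ((norm_eq_zero.mp (pow_eq_zero_iff two_ne_zero |>.mp hi)).trans
    (map_zero _).symm)

theorem linearIndependent_monomial [Nonempty ι] : LinearIndependent ℂ (monomial (ι := ι)) := by
  refine .of_comp toL2.toLinearMap (linearIndependent_of_ne_zero_of_inner_eq_zero (fun α h => ?_)
    pairwise_inner_toL2_monomial)
  have := norm_sq_toL2_monomial_pos α
  simp_all

theorem mulVec_mem_weightSpace {w : ι → ℤ} {V : Matrix κ' κ C(ComplexSphere ι, ℂ)}
    {f : κ → C(ComplexSphere ι, ℂ)} {p : κ → ℤ} {q : κ' → ℤ} {k : ℤ}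
    (hV : ∀ l i, V l i ∈ weightSpace w (p i - q l)) (hf : ∀ i, f i ∈ weightSpace w (k - p i))
    (l : κ') : (V *ᵥ f) l ∈ weightSpace w (k - q l) :=
  sum_mem fun i _ => by
    convert mul_mem_weightSpace (hV l i) (hf i) using 2
    ring

variable [DecidableEq ι]

/-- The restrictions to the sphere of the homogeneous holomorphic polynomials of degree `k`. -/
noncomputable def homogeneousPart (ι : Type*) [Fintype ι] [DecidableEq ι] (k : ℕ) :
    Submodule ℂ C(ComplexSphere ι, ℂ) :=
  Submodule.span ℂ (monomial '' (Finset.univ.piAntidiag k : Finset (ι → ℕ)))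

theorem homogeneousPart_le_polynomialTail (k : ℕ) : homogeneousPart ι k ≤ polynomialTail ι k :=
  Submodule.span_mono (Set.image_mono fun α hα => by simp_all)

theorem homogeneousPart_le_weightSpace (k : ℕ) : homogeneousPart ι k ≤ weightSpace 1 k := by
  refine Submodule.span_le.mpr ?_
  rintro _ ⟨α, hα, rfl⟩
  have hsum : ∑ i, α i = k := by simpa using hα
  have h := monomial_mem_weightSpace 1 α
  simpa [← Nat.cast_sum, hsum] using h

instance (k : ℕ) : FiniteDimensional ℂ (homogeneousPart ι k) :=
  .span_of_finite ℂ ((Finset.finite_toSet _).image _)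


instance (k : ℕ) : Module.Free ℂ (homogeneousPart ι k) :=
  @Module.Free.of_divisionRing _ _ _ (homogeneousPart ι k).addCommGroup _

theorem finrank_homogeneousPart [Nonempty ι] (k : ℕ) :
    Module.finrank ℂ (homogeneousPart ι k) = (Finset.univ.piAntidiag k : Finset (ι → ℕ)).card := by
  classical
  rw [homogeneousPart, ← Finset.coe_image, finrank_span_finset_eq_card,
    Finset.card_image_of_injective _ linearIndependent_monomial.injective]
  rw [Finset.coe_image]
  exact (linearIndependent_monomial.linearIndepOn _).id_image

/-- The coefficients against monomials of degree `e l` of the `l`-th component of `V *ᵥ f`, for `f`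
whose `i`-th component is homogeneous of degree `d i`. -/
noncomputable def compression (V : Matrix κ' κ C(ComplexSphere ι, ℂ)) (d : κ → ℕ) (e : κ' → ℕ) :
    (Π i, homogeneousPart ι (d i)) →ₗ[ℂ]
      ((Σ l, (Finset.univ.piAntidiag (e l) : Finset (ι → ℕ))) → ℂ) :=
  LinearMap.pi fun β =>
    (innerSL ℂ (toL2 (monomial β.2.1)) ∘L toL2).toLinearMap ∘ₗ LinearMap.proj β.1 ∘ₗ
      V.mulVecLin.restrictScalars ℂ ∘ₗ
        LinearMap.pi fun i => (homogeneousPart ι (d i)).subtype ∘ₗ LinearMap.proj i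

variable [Fintype κ'] [DecidableEq κ] {V : Matrix κ' κ C(ComplexSphere ι, ℂ)}

theorem exists_injective_compression (hV : Vᴴ * V = 1) {p : κ → ℤ} {q : κ' → ℤ}
    (hw : ∀ l i, V l i ∈ weightSpace 1 (p i - q l)) :
    ∃ K : ℤ, ∀ k ≥ K, Function.Injective
      (compression V (fun i => (k - p i).toNat) (fun l => (k - q l).toNat)) := by
  obtain ⟨K, hK⟩ := exists_eq_zero_of_inner_toL2_mulVec_eq_zero hV
  obtain ⟨P, hP⟩ := Finite.exists_le p
  obtain ⟨Q, hQ⟩ := Finite.exists_le q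
  refine ⟨max (K + P) Q, fun k hk => (injective_iff_map_eq_zero _).mpr fun f hf => ?_⟩
  have hp : ∀ i, ((k - p i).toNat : ℤ) = k - p i := fun i => by have := hP i; omega
  have hq : ∀ l, ((k - q l).toNat : ℤ) = k - q l := fun l => by have := hQ l; omega
  have hfw : ∀ l, (V *ᵥ fun i => (f i : C(ComplexSphere ι, ℂ))) l ∈ weightSpace 1 (k - q l) :=
    mulVec_mem_weightSpace hw fun i => by
      have h := homogeneousPart_le_weightSpace _ (f i).2
      rwa [hp i] at h
  have horth : ∀ l, ∀ g ∈ polynomialTail ι 0,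
      ⟪toL2 g, toL2 ((V *ᵥ fun i => (f i : C(ComplexSphere ι, ℂ))) l)⟫_ℂ = 0 := by
    intro l g hg
    induction hg using Submodule.span_induction with
    | mem g hg =>
      obtain ⟨β, -, rfl⟩ := hg
      by_cases hβ : ∑ i, β i = (k - q l).toNat
      · exact congrFun hf ⟨l, β, by simpa using hβ⟩
      · refine inner_toL2_eq_zero_of_mem_weightSpace (monomial_mem_weightSpace 1 β) (hfw l) ?_
        rw [← hq l]
        simp only [Pi.one_apply, one_mul]
        exact_mod_cast hβ
    | zero => rw [map_zero, inner_zero_left]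
    | add g₁ g₂ _ _ h₁ h₂ => rw [map_add, inner_add_left, h₁, h₂, add_zero]
    | smul c g _ h => rw [map_smul, inner_smul_left, h, mul_zero]
  have hzero := hK _ (fun i => polynomialTail_antitone (by have := hP i; omega)
    (homogeneousPart_le_polynomialTail _ (f i).2)) horth
  exact funext fun i => Subtype.ext (congrFun hzero i)

theorem exists_sum_card_piAntidiag_le [Nonempty ι] (hV : Vᴴ * V = 1) {p : κ → ℤ} {q : κ' → ℤ}
    (hw : ∀ l i, V l i ∈ weightSpace 1 (p i - q l)) :
    ∃ K : ℤ, ∀ k ≥ K, ∑ i, (Finset.univ.piAntidiag (k - p i).toNat : Finset (ι → ℕ)).card ≤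
      ∑ l, (Finset.univ.piAntidiag (k - q l).toNat : Finset (ι → ℕ)).card := by
  obtain ⟨K, hK⟩ := exists_injective_compression hV hw
  refine ⟨K, fun k hk => ?_⟩
  have h := LinearMap.finrank_le_finrank_of_injective (hK k hk)
  rw [Module.finrank_pi_fintype, Module.finrank_fintype_fun_eq_card] at h
  simpa [finrank_homogeneousPart] using h

end ComplexSphere

end DimensionCount

section WeightVanishing

theorem two_mul_choose_toNat_add_two {k : ℤ} (hk : 0 ≤ k) :
    (2 * ((k.toNat + 2).choose 2 : ℕ) : ℤ) = (k + 1) * (k + 2) := by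
  lift k to ℕ using hk
  rw [Int.toNat_natCast, Nat.choose_two_right]
  have h := Nat.div_mul_cancel (Nat.even_mul_pred_self (k + 2)).two_dvd
  zify at h
  push_cast at h ⊢
  linarith

theorem choose_toNat_add_succ {k : ℤ} (hk : 0 < k) (r : ℕ) :
    (k.toNat + (r + 1)).choose (r + 1) =
      (k.toNat + r).choose r + ((k - 1).toNat + (r + 1)).choose (r + 1) := by
  obtain ⟨m, rfl⟩ : ∃ m : ℕ, k = m + 1 := ⟨(k - 1).toNat, by omega⟩
  rw [show ((m : ℤ) + 1).toNat = m + 1 by omega, show ((m : ℤ) + 1 - 1).toNat = m by omega,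
    ← add_assoc, Nat.choose_succ_succ, add_right_comm m 1 r]
  rfl

variable {κ : Type*} [Fintype κ] {c : κ → ℤ}

theorem sum_sq_eq_zero_of_forall_sum_mul_eq {K : ℤ}
    (h : ∀ k ≥ K, ∑ i, (k - c i + 1) * (k - c i + 2) = ∑ _i : κ, (k + 1) * (k + 2)) :
    ∑ i, c i ^ 2 = 0 := by
  have hexpand : ∀ k, ∑ i, (k - c i + 1) * (k - c i + 2) =
      ∑ _i : κ, (k + 1) * (k + 2) - (2 * k + 3) * ∑ i, c i + ∑ i, c i ^ 2 := fun k => by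
    rw [Finset.mul_sum, ← Finset.sum_sub_distrib, ← Finset.sum_add_distrib]
    exact Finset.sum_congr rfl fun i _ => by ring
  have h₀ := (hexpand K).symm.trans (h K le_rfl)
  have h₁ := (hexpand (K + 1)).symm.trans (h (K + 1) (by omega))
  have hsum : ∑ i, c i = 0 := by linarith
  rw [hsum] at h₀
  linarith

theorem eq_zero_of_sum_choose_toNat_sub_eq {r : ℕ} (hr : 2 ≤ r) {K : ℤ}
    (h : ∀ k ≥ K, ∑ i, ((k - c i).toNat + r).choose r = ∑ _i : κ, (k.toNat + r).choose r) :
    c = 0 := by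
  obtain ⟨C, hC⟩ := Finite.exists_le c
  induction r, hr using Nat.le_induction generalizing K with
  | base =>
    have hquad : ∀ k ≥ max K (max C 0),
        ∑ i, (k - c i + 1) * (k - c i + 2) = ∑ _i : κ, (k + 1) * (k + 2) := by
      intro k hk
      have hci : ∀ i, 0 ≤ k - c i := fun i => by have := hC i; omega
      simp_rw [← two_mul_choose_toNat_add_two (hci _),
        ← two_mul_choose_toNat_add_two (show 0 ≤ k by omega), ← Finset.mul_sum]
      exact_mod_cast congrArg (2 * ·) (h k (by omega))
    have hsq := sum_sq_eq_zero_of_forall_sum_mul_eq hquad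
    funext i
    exact pow_eq_zero_iff two_ne_zero |>.mp
      ((Finset.sum_eq_zero_iff_of_nonneg fun i _ => sq_nonneg _).mp hsq i (Finset.mem_univ i))
  | succ r _ ih =>
    refine ih (K := max (K + 1) (max (C + 1) 1)) fun k hk => ?_
    have hci : ∀ i, 0 < k - c i := fun i => by have := hC i; omega
    have hk₀ := h k (by omega)
    have hk₁ := h (k - 1) (by omega)
    simp_rw [choose_toNat_add_succ (hci _), choose_toNat_add_succ (show 0 < k by omega),
      Finset.sum_add_distrib, sub_right_comm k _ 1] at hk₀
    omega

theorem card_piAntidiag_univ {ι : Type*} [Fintype ι] [DecidableEq ι] {r : ℕ}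
    (hr : Fintype.card ι = r + 1) (k : ℕ) :
    (Finset.univ.piAntidiag k : Finset (ι → ℕ)).card = (k + r).choose r := by
  have h := Finset.card_finsuppAntidiag_nat_eq_choose (s := (Finset.univ : Finset ι)) k
  rw [Finset.finsuppAntidiag, Finset.card_map, Finset.card_attach, Finset.card_univ, hr] at h
  rw [h, show r + 1 + k - 1 = k + r by omega, Nat.choose_symm_add]

namespace ComplexSphere

theorem eq_zero_of_forall_mem_weightSpace {ι : Type*} [Fintype ι] [DecidableEq κ]
    (hι : 3 ≤ Fintype.card ι) {V : Matrix κ κ C(ComplexSphere ι, ℂ)} (hV : Vᴴ * V = 1)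
    (hw : ∀ l i, V l i ∈ weightSpace 1 (c i)) : c = 0 := by
  classical
  have : Nonempty ι := Fintype.card_pos_iff.mp (by omega)
  obtain ⟨r, hr⟩ : ∃ r, Fintype.card ι = r + 1 := ⟨Fintype.card ι - 1, by omega⟩
  have hV' : Vᴴᴴ * Vᴴ = 1 := by rw [conjTranspose_conjTranspose, mul_eq_one_comm.mp hV]
  obtain ⟨K₁, h₁⟩ := exists_sum_card_piAntidiag_le hV (p := c) (q := 0) (by simpa using hw)
  obtain ⟨K₂, h₂⟩ := exists_sum_card_piAntidiag_le hV' (p := 0) (q := c) fun l i => by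
    simpa using star_mem_weightSpace (hw i l)
  refine eq_zero_of_sum_choose_toNat_sub_eq (r := r) (by omega) (K := max K₁ K₂) fun k hk => ?_
  simp_rw [← card_piAntidiag_univ hr]
  simpa using (h₁ k (by omega)).antisymm (h₂ k (by omega))

end ComplexSphere

end WeightVanishing

section UnitEigenvectors

open scoped ComplexOrder

variable {κ E : Type*} [Fintype κ] [NormedAddCommGroup E] [InnerProductSpace ℂ E]

/-- `v` is an eigenvector of `T` of norm one. The eigenvalue is written as the Rayleigh quotient
`⟪v, T v⟫`, so that the condition is closed in `(T, v)`. -/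
def IsUnitEigenvector (T : E →L[ℂ] E) (v : E) : Prop := ‖v‖ = 1 ∧ T v = ⟪v, T v⟫_ℂ • v

variable (κ) in
/-- `T` is normal and multiplicity-free: it is diagonal with distinct eigenvalues in some
orthonormal basis, indexed by `κ`. -/
def IsMultiplicityFree (T : E →L[ℂ] E) : Prop :=
  ∃ (b : OrthonormalBasis κ ℂ E) (μ : κ → ℂ), Function.Injective μ ∧ ∀ i, T (b i) = μ i • b i

variable {T : E →L[ℂ] E} {u v w : E} {b : OrthonormalBasis κ ℂ E} {μ : κ → ℂ}

theorem IsUnitEigenvector.of_apply_eq_smul {a : ℂ} (hv : ‖v‖ = 1) (h : T v = a • v) :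
    IsUnitEigenvector T v :=
  ⟨hv, by rw [h, inner_smul_right, inner_self_eq_norm_sq_to_K, hv]; simp⟩

theorem IsUnitEigenvector.smul (hv : IsUnitEigenvector T v) {c : ℂ} (hc : ‖c‖ = 1) :
    IsUnitEigenvector T (c • v) :=
  .of_apply_eq_smul (a := ⟪v, T v⟫_ℂ) (by rw [norm_smul, hc, hv.1, one_mul]) <| by
    rw [map_smul, smul_comm, ← hv.2]

theorem inner_apply_eq_mul_of_apply_eq_smul (hb : ∀ i, T (b i) = μ i • b i)
    (i : κ) (v : E) : ⟪b i, T v⟫_ℂ = μ i * ⟪b i, v⟫_ℂ := by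
  conv_lhs => rw [← b.sum_repr' v, map_sum]
  simp_rw [map_smul, hb, smul_smul]
  rw [b.orthonormal.inner_right_fintype, mul_comm]

theorem exists_basis_inner_ne_zero (b : OrthonormalBasis κ ℂ E) (hv : v ≠ 0) :
    ∃ i, ⟪b i, v⟫_ℂ ≠ 0 := by
  contrapose! hv
  rw [← b.sum_repr' v]
  simp [hv]

theorem IsUnitEigenvector.exists_eq_smul (hv : IsUnitEigenvector T v)
    (hμ : Function.Injective μ) (hb : ∀ i, T (b i) = μ i • b i) : ∃ i, v = ⟪b i, v⟫_ℂ • b i := by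
  have hrayleigh (j : κ) (hj : ⟪b j, v⟫_ℂ ≠ 0) : μ j = ⟪v, T v⟫_ℂ := by
    apply mul_right_cancel₀ hj
    rw [← inner_apply_eq_mul_of_apply_eq_smul hb, ← inner_smul_right, ← hv.2]
  obtain ⟨i, hi⟩ := exists_basis_inner_ne_zero b (norm_ne_zero_iff.mp (hv.1.trans_ne one_ne_zero))
  refine ⟨i, ?_⟩
  conv_lhs => rw [← b.sum_repr' v]
  refine Fintype.sum_eq_single i fun j hji => ?_
  have hj : ⟪b j, v⟫_ℂ = 0 := by
    by_contra hj
    exact hji (hμ ((hrayleigh j hj).trans (hrayleigh i hi).symm))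
  rw [hj, zero_smul]

theorem IsMultiplicityFree.eq_inner_smul (hT : IsMultiplicityFree κ T)
    (hv : IsUnitEigenvector T v) (hw : IsUnitEigenvector T w) (hvw : ⟪v, w⟫_ℂ ≠ 0) :
    w = ⟪v, w⟫_ℂ • v := by
  obtain ⟨b, μ, hμ, hb⟩ := hT
  obtain ⟨i, hi⟩ := hv.exists_eq_smul hμ hb
  obtain ⟨j, hj⟩ := hw.exists_eq_smul hμ hb
  set c := ⟪b i, v⟫_ℂ
  set d := ⟪b j, w⟫_ℂ
  obtain rfl : i = j := by
    by_contra hij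
    exact hvw (by rw [hi, hj, inner_smul_left, inner_smul_right, b.inner_eq_zero hij]; simp)
  have hc : c * star c = 1 := by
    have h := hv.1
    rw [hi, norm_smul, b.norm_eq_one, mul_one] at h
    rw [← starRingEnd_apply, Complex.mul_conj', h]; simp
  have hinner : ⟪v, w⟫_ℂ = d * star c := by
    rw [hi, hj, inner_smul_left, inner_smul_right, b.inner_eq_one]
    simp [mul_comm]
  rw [hinner, hi, smul_smul, mul_assoc, mul_comm (star c), hc, mul_one]
  exact hj

theorem inner_ne_zero_of_le_norm_inner (hu : ‖u‖ = 1) (hw : ‖w‖ = 1) (hv : ‖v‖ = 1)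
    (huv : 4 / 5 ≤ ‖⟪u, v⟫_ℂ‖) (hwv : 4 / 5 ≤ ‖⟪w, v⟫_ℂ‖) : ⟪u, w⟫_ℂ ≠ 0 := by
  intro huw
  have hon : Orthonormal ℂ ![u, w] := by
    rw [orthonormal_vecCons_iff]
    exact ⟨hu, by simpa using huw, by simpa using hw⟩
  have hbessel := hon.sum_inner_products_le v (s := Finset.univ)
  simp only [Fin.sum_univ_two, cons_val_zero, cons_val_one, hv] at hbessel
  nlinarith

theorem le_norm_of_ofReal_le {r : ℝ} {z : ℂ} (h : (r : ℂ) ≤ z) : r ≤ ‖z‖ :=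
  (Complex.le_def.mp h).1.trans (Complex.re_le_norm z)

theorem IsMultiplicityFree.eq_of_le_inner (hT : IsMultiplicityFree κ T) (hv : ‖v‖ = 1)
    (hu : IsUnitEigenvector T u) (hw : IsUnitEigenvector T w)
    (huv : ((4 / 5 : ℝ) : ℂ) ≤ ⟪u, v⟫_ℂ) (hwv : ((4 / 5 : ℝ) : ℂ) ≤ ⟪w, v⟫_ℂ) : w = u := by
  have hc := hT.eq_inner_smul hu hw
    (inner_ne_zero_of_le_norm_inner hu.1 hw.1 hv (le_norm_of_ofReal_le huv)
      (le_norm_of_ofReal_le hwv))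
  set c := ⟪u, w⟫_ℂ
  have hpos : (0 : ℂ) ≤ ((4 / 5 : ℝ) : ℂ) := by
    exact_mod_cast (by norm_num : (0 : ℝ) ≤ 4 / 5)
  have hnorm : ‖c‖ = 1 := by
    have h := hw.1
    rwa [hc, norm_smul, hu.1, mul_one] at h
  have hinner : ⟪w, v⟫_ℂ = star c * ⟪u, v⟫_ℂ := by rw [hc, inner_smul_left]; rfl
  have heq : ⟪w, v⟫_ℂ = ⟪u, v⟫_ℂ := by
    rw [Complex.eq_coe_norm_of_nonneg (hpos.trans hwv), hinner, norm_mul, norm_star, hnorm,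
      one_mul, ← Complex.eq_coe_norm_of_nonneg (hpos.trans huv)]
  have hne : ⟪u, v⟫_ℂ ≠ 0 := norm_pos_iff.mp ((by norm_num : (0 : ℝ) < 4 / 5).trans_le
    (le_norm_of_ofReal_le huv))
  have hstar : star c = 1 := mul_eq_right₀ hne |>.mp (hinner.symm.trans heq)
  rw [hc, star_injective (hstar.trans (star_one ℂ).symm), one_smul]

theorem IsUnitEigenvector.exists_le_inner (hw : IsUnitEigenvector T w) {r : ℝ} (hr : 0 < r)
    (hwv : r ≤ ‖⟪w, v⟫_ℂ‖) : ∃ u, IsUnitEigenvector T u ∧ (r : ℂ) ≤ ⟪u, v⟫_ℂ := by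
  set a := ⟪w, v⟫_ℂ with ha
  have ha0 : (‖a‖ : ℂ) ≠ 0 := by exact_mod_cast (hr.trans_le hwv).ne'
  refine ⟨(a / ‖a‖) • w, hw.smul ?_, ?_⟩
  · rw [norm_div, Complex.norm_real, norm_norm, div_self (by exact_mod_cast ha0)]
  · have hinner : ⟪(a / ‖a‖) • w, v⟫_ℂ = ‖a‖ := by
      rw [inner_smul_left, ← ha, map_div₀, Complex.conj_ofReal, div_mul_eq_mul_div,
        Complex.conj_mul', sq, mul_div_cancel_right₀ _ ha0]
    rw [hinner]
    exact_mod_cast hwv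

end UnitEigenvectors

section Eigenframes

open scoped ComplexOrder

variable {κ E X Y : Type*} [NormedAddCommGroup E] [InnerProductSpace ℂ E]
  [TopologicalSpace X] [TopologicalSpace Y]

theorem continuous_of_isClosed_graph [CompactSpace Y] {f : X → Y}
    (h : IsClosed {p : X × Y | p.2 = f p.1}) : Continuous f := by
  refine continuous_iff_isClosed.mpr fun C hC => ?_
  have hpre : f ⁻¹' C = Prod.fst '' ({p : X × Y | p.2 = f p.1} ∩ Prod.snd ⁻¹' C) := by
    ext x; simp
  exact hpre ▸ isClosedMap_fst_of_compactSpace _ (h.inter (hC.preimage continuous_snd))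

theorem isClosed_setOf_isUnitEigenvector {L : X → E →L[ℂ] E} {v : X → E} (hL : Continuous L)
    (hv : Continuous v) : IsClosed {x | IsUnitEigenvector (L x) (v x)} :=
  (isClosed_eq hv.norm continuous_const).inter (isClosed_eq (by fun_prop) (by fun_prop))

/-- An orthonormal family of eigenvectors of `T`. -/
def IsEigenframe (T : E →L[ℂ] E) (v : κ → E) : Prop :=
  Orthonormal ℂ v ∧ ∀ i, IsUnitEigenvector T (v i)

theorem isClosed_setOf_isEigenframe {L : X → E →L[ℂ] E} {v : X → κ → E} (hL : Continuous L)
    (hv : Continuous v) : IsClosed {x | IsEigenframe (L x) (v x)} := by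
  classical
  simp only [IsEigenframe, orthonormal_iff_ite, Set.ofPred_and, Set.ofPred_forall]
  refine .inter (isClosed_iInter fun i => isClosed_iInter fun j => isClosed_eq ?_ ?_)
    (isClosed_iInter fun i => isClosed_setOf_isUnitEigenvector hL (by fun_prop)) <;> fun_prop

variable (κ) in
/-- The operators `L x` can be diagonalized by orthonormal eigenvectors indexed by `κ` and
depending continuously on `x`. -/
def HasContinuousEigenframe (L : X → E →L[ℂ] E) : Prop :=
  ∃ v : X → κ → E, Continuous v ∧ ∀ x, IsEigenframe (L x) (v x)

/-- Every unit eigenvector of `T` is nearly parallel to a member of each eigenframe of `T'`. -/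
def IsSpectrallyClose (κ : Type*) (T T' : E →L[ℂ] E) : Prop :=
  ∀ (v : E) (w : κ → E), IsUnitEigenvector T v → IsEigenframe T' w → ∃ i, 4 / 5 < ‖⟪w i, v⟫_ℂ‖

theorem isOpen_setOf_isSpectrallyClose [FiniteDimensional ℂ E] :
    IsOpen {p : (E →L[ℂ] E) × (E →L[ℂ] E) | IsSpectrallyClose κ p.1 p.2} := by
  have : ProperSpace E := FiniteDimensional.proper_rclike ℂ E
  let S := Metric.sphere (0 : E) 1
  let bad : Set (((E →L[ℂ] E) × (E →L[ℂ] E)) × (S × (κ → S))) :=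
    {q | IsUnitEigenvector q.1.1 (q.2.1 : E) ∧ IsEigenframe q.1.2 (fun i => (q.2.2 i : E)) ∧
      ∀ i, ‖⟪(q.2.2 i : E), q.2.1⟫_ℂ‖ ≤ 4 / 5}
  have hbad : IsClosed bad := by
    have hinner : IsClosed {q : ((E →L[ℂ] E) × (E →L[ℂ] E)) × (S × (κ → S)) |
        ∀ i, ‖⟪(q.2.2 i : E), q.2.1⟫_ℂ‖ ≤ 4 / 5} := by
      simp only [Set.ofPred_forall]
      exact isClosed_iInter fun i => isClosed_le (by fun_prop) continuous_const
    exact (isClosed_setOf_isUnitEigenvector (by fun_prop) (by fun_prop)).inter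
      ((isClosed_setOf_isEigenframe (by fun_prop) (by fun_prop)).inter hinner)
  convert (isClosedMap_fst_of_compactSpace bad hbad).isOpen_compl
  ext ⟨T, T'⟩
  constructor
  · rintro h ⟨⟨_, v, w⟩, ⟨hv, hw, hvw⟩, rfl⟩
    obtain ⟨i, hi⟩ := h v (fun i => w i) hv hw
    exact (hvw i).not_gt hi
  · intro h v w hv hw
    by_contra! hvw
    exact h ⟨⟨(T, T'), ⟨v, mem_sphere_zero_iff_norm.mpr hv.1⟩,
      fun i => ⟨w i, mem_sphere_zero_iff_norm.mpr (hw.2 i).1⟩⟩, ⟨hv, hw, hvw⟩, rfl⟩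

variable [Fintype κ]

theorem IsMultiplicityFree.exists_isEigenframe {T : E →L[ℂ] E} (hT : IsMultiplicityFree κ T) :
    ∃ v : κ → E, IsEigenframe T v := by
  obtain ⟨b, μ, -, hb⟩ := hT
  exact ⟨b, b.orthonormal, fun i => .of_apply_eq_smul (b.norm_eq_one i) (hb i)⟩

theorem IsMultiplicityFree.exists_norm_inner_eq_one {T : E →L[ℂ] E}
    (hT : IsMultiplicityFree κ T) {v : E} {w : κ → E} (hv : IsUnitEigenvector T v)
    (hw : IsEigenframe T w) : ∃ i, ‖⟪w i, v⟫_ℂ‖ = 1 := by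
  obtain ⟨b, -⟩ := id hT
  have : FiniteDimensional ℂ E := b.toBasis.finiteDimensional_of_finite
  have hspan : ⊤ ≤ Submodule.span ℂ (Set.range w) :=
    (hw.1.linearIndependent.span_eq_top_of_card_eq_finrank' (Module.finrank_eq_card_basis
      b.toBasis).symm).ge
  obtain ⟨i, hi⟩ := exists_basis_inner_ne_zero (.mk hw.1 hspan)
    (norm_ne_zero_iff.mp (hv.1.trans_ne one_ne_zero))
  rw [OrthonormalBasis.coe_mk] at hi
  have h := hv.1
  rw [hT.eq_inner_smul (hw.2 i) hv hi, norm_smul, (hw.2 i).1, mul_one] at h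
  exact ⟨i, h⟩

theorem IsMultiplicityFree.isSpectrallyClose_self {T : E →L[ℂ] E}
    (hT : IsMultiplicityFree κ T) : IsSpectrallyClose κ T T := fun _ _ hv hw =>
  (hT.exists_norm_inner_eq_one hv hw).imp fun _ hi => by norm_num [hi]

variable [FiniteDimensional ℂ E]

theorem exists_continuous_isUnitEigenvector {L : X → E →L[ℂ] E} (hL : Continuous L)
    (hmf : ∀ x, IsMultiplicityFree κ (L x)) {v : X → E} (hv : Continuous v)
    (hv1 : ∀ x, ‖v x‖ = 1)
    (hnear : ∀ x, ∃ w, IsUnitEigenvector (L x) w ∧ 4 / 5 ≤ ‖⟪w, v x⟫_ℂ‖) :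
    ∃ u : X → E, Continuous u ∧
      ∀ x, IsUnitEigenvector (L x) (u x) ∧ 4 / 5 ≤ ‖⟪u x, v x⟫_ℂ‖ := by
  have : ProperSpace E := FiniteDimensional.proper_rclike ℂ E
  have hu (x : X) : ∃ u : Metric.sphere (0 : E) 1,
      IsUnitEigenvector (L x) u ∧ ((4 / 5 : ℝ) : ℂ) ≤ ⟪(u : E), v x⟫_ℂ := by
    obtain ⟨w, hw, hwv⟩ := hnear x
    obtain ⟨u, hu, huv⟩ := hw.exists_le_inner (by norm_num) hwv
    exact ⟨⟨u, mem_sphere_zero_iff_norm.mpr hu.1⟩, hu, huv⟩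
  choose u hu huv using hu
  refine ⟨fun x => u x, continuous_subtype_val.comp (continuous_of_isClosed_graph ?_),
    fun x => ⟨hu x, le_norm_of_ofReal_le (huv x)⟩⟩
  have hgraph : {p : X × Metric.sphere (0 : E) 1 | p.2 = u p.1} =
      {p | IsUnitEigenvector (L p.1) p.2 ∧ ((4 / 5 : ℝ) : ℂ) ≤ ⟪(p.2 : E), v p.1⟫_ℂ} := by
    ext ⟨x, w⟩
    constructor
    · rintro (rfl : w = u x)
      exact ⟨hu x, huv x⟩
    · rintro ⟨hw, hwv⟩
      exact Subtype.ext ((hmf x).eq_of_le_inner (hv1 x) (hu x) hw (huv x) hwv)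
  rw [hgraph]
  have hle : IsClosed {p : X × Metric.sphere (0 : E) 1 |
      ((4 / 5 : ℝ) : ℂ) ≤ ⟪(p.2 : E), v p.1⟫_ℂ} := isClosed_le continuous_const (by fun_prop)
  exact (isClosed_setOf_isUnitEigenvector (hL.comp continuous_fst)
    (continuous_subtype_val.comp continuous_snd)).inter hle

theorem HasContinuousEigenframe.of_isSpectrallyClose {L L' : X → E →L[ℂ] E}
    (h : HasContinuousEigenframe κ L) (hL' : Continuous L')
    (hmf : ∀ x, IsMultiplicityFree κ (L' x)) (hclose : ∀ x, IsSpectrallyClose κ (L x) (L' x)) :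
    HasContinuousEigenframe κ L' := by
  obtain ⟨v, hv, hframe⟩ := h
  have hnear (i : κ) (x : X) : ∃ w, IsUnitEigenvector (L' x) w ∧ 4 / 5 ≤ ‖⟪w, v x i⟫_ℂ‖ := by
    obtain ⟨b, hb⟩ := (hmf x).exists_isEigenframe
    obtain ⟨j, hj⟩ := hclose x _ b ((hframe x).2 i) hb
    exact ⟨b j, hb.2 j, hj.le⟩
  choose u hu huv using fun i => exists_continuous_isUnitEigenvector hL' hmf
    (v := fun x => v x i) (by fun_prop) (fun x => ((hframe x).2 i).1) (hnear i)
  refine ⟨fun x i => u i x, by fun_prop, fun x => ⟨⟨fun i => (huv i x).1.1, fun i j hij => ?_⟩,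
    fun i => (huv i x).1⟩⟩
  by_contra hne
  -- Parallel to both `v x i` and `v x j` up to a small angle, `u i x` contradicts Bessel.
  have hpar := (hmf x).eq_inner_smul (huv i x).1 (huv j x).1 hne
  have hone : ‖⟪u i x, u j x⟫_ℂ‖ = 1 := by
    have h := (huv j x).1.1
    rwa [hpar, norm_smul, (huv i x).1.1, mul_one] at h
  have hj : 4 / 5 ≤ ‖⟪v x j, u i x⟫_ℂ‖ := by
    have h := (huv j x).2
    rwa [hpar, inner_smul_left, norm_mul, RCLike.norm_conj, hone, one_mul, norm_inner_symm] at h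
  have hi : 4 / 5 ≤ ‖⟪v x i, u i x⟫_ℂ‖ := norm_inner_symm (𝕜 := ℂ) (v x i) (u i x) ▸ (huv i x).2
  exact inner_ne_zero_of_le_norm_inner ((hframe x).2 i).1 ((hframe x).2 j).1 (huv i x).1.1 hi hj
    ((hframe x).1.2 hij)

theorem HasContinuousEigenframe.of_preconnectedSpace [CompactSpace X] [PreconnectedSpace Y]
    {L : Y × X → E →L[ℂ] E} (hL : Continuous L) (hmf : ∀ p, IsMultiplicityFree κ (L p))
    {y₀ : Y} (h : HasContinuousEigenframe κ fun x => L (y₀, x)) (y : Y) :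
    HasContinuousEigenframe κ fun x => L (y, x) := by
  have hclose (y : Y) : ∀ᶠ z in nhds y, ∀ x ∈ Set.univ,
      IsSpectrallyClose κ (L (y, x)) (L (z, x)) ∧ IsSpectrallyClose κ (L (z, x)) (L (y, x)) := by
    refine isCompact_univ.eventually_forall_of_forall_eventually fun x _ => ?_
    have hclose (p : (E →L[ℂ] E) × (E →L[ℂ] E)) (hp : IsSpectrallyClose κ p.1 p.2) :
        ∀ᶠ q in nhds p, IsSpectrallyClose κ q.1 q.2 :=
      isOpen_setOf_isSpectrallyClose.mem_nhds hp
    have hself := (hmf (y, x)).isSpectrallyClose_self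
    exact (Continuous.tendsto (f := fun p : Y × X => (L (y, p.2), L p)) (by fun_prop) (y, x)
      |>.eventually (hclose _ hself)).and
      (Continuous.tendsto (f := fun p : Y × X => (L p, L (y, p.2))) (by fun_prop) (y, x)
      |>.eventually (hclose _ hself))
  refine PreconnectedSpace.induction₂'
    (fun y z => HasContinuousEigenframe κ (fun x => L (y, x)) →
      HasContinuousEigenframe κ fun x => L (z, x)) (fun y => ?_) ⟨fun _ _ _ f g => g ∘ f⟩ y₀ y h
  filter_upwards [hclose y] with z hz
  exact ⟨fun h => h.of_isSpectrallyClose (by fun_prop) (fun _ => hmf _) fun x => (hz x ⟨⟩).1,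
    fun h => h.of_isSpectrallyClose (by fun_prop) (fun _ => hmf _) fun x => (hz x ⟨⟩).2⟩

theorem HasContinuousEigenframe.of_contractibleSpace [CompactSpace X] [ContractibleSpace X]
    {L : X → E →L[ℂ] E} (hL : Continuous L) (hmf : ∀ x, IsMultiplicityFree κ (L x)) :
    HasContinuousEigenframe κ L := by
  obtain ⟨x₀, ⟨H⟩⟩ := id_nullhomotopic X
  have h : HasContinuousEigenframe κ fun x => L (H.symm (0, x)) := by
    obtain ⟨v, hv⟩ := (hmf x₀).exists_isEigenframe
    exact ⟨fun _ => v, continuous_const, fun x => by simpa using hv⟩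
  simpa using h.of_preconnectedSpace (L := fun p => L (H.symm p)) (hL.comp H.symm.continuous)
    (fun _ => hmf _) 1

end Eigenframes

section CircleCocycles

open Real Set

variable {A : Type*} [TopologicalSpace A]

/-- The lift is obtained by lifting the homotopy `(s, t, w) ↦ χ (exp (s t), w)`. -/
theorem exists_continuous_exp_eq_comp_exp {χ : Circle × A → Circle} (hχ : Continuous χ)
    (hχ₁ : ∀ w, χ (1, w) = 1) :
    ∃ θ : ℝ × A → ℝ, Continuous θ ∧ ∀ t w, Circle.exp (θ (t, w)) = χ (Circle.exp t, w) := by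
  let H : C(unitInterval × (ℝ × A), Circle) :=
    ⟨fun p => χ (Circle.exp (p.1 * p.2.1), p.2.2), by fun_prop⟩
  have hH₀ (p : ℝ × A) : H (0, p) = Circle.exp ((0 : C(ℝ × A, ℝ)) p) := by simp [H, hχ₁]
  let θ := Circle.isCoveringMap_exp.liftHomotopy H 0 hH₀
  refine ⟨fun p => θ (1, p), by fun_prop, fun t w => ?_⟩
  calc Circle.exp (θ (1, t, w)) = H (1, t, w) :=
        congrFun (Circle.isCoveringMap_exp.liftHomotopy_lifts H 0 hH₀) (1, t, w)
    _ = χ (Circle.exp t, w) := by simp [H]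

theorem exists_continuous_comp_smul_eq_sub [MulAction Circle A] {η : Circle × A → ℝ}
    (hη : Continuous η) (hadd : ∀ a b w, η (a * b, w) = η (a, b • w) + η (b, w)) :
    ∃ ψ : A → ℝ, Continuous ψ ∧ ∀ a w, ψ (a • w) = ψ w - η (a, w) := by
  -- `ψ` is the average of `η (·, w)` over the circle
  refine ⟨fun w => (2 * π)⁻¹ * ∫ t in (0)..(2 * π), η (Circle.exp t, w), by fun_prop, fun a w => ?_⟩
  obtain ⟨s, rfl⟩ := Circle.exp_surjective a
  have hshift : ∫ t in (0)..(2 * π), η (Circle.exp (t + s), w) =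
      ∫ t in (0)..(2 * π), η (Circle.exp t, w) := by
    have hper : Function.Periodic (fun t => η (Circle.exp t, w)) (2 * π) := fun t => by
      simp only [Circle.exp_add_two_pi]
    rw [intervalIntegral.integral_comp_add_right fun t => η (Circle.exp t, w), zero_add,
      add_comm _ s, hper.intervalIntegral_add_eq s 0, zero_add]
  have hint : ∫ t in (0)..(2 * π), η (Circle.exp t, Circle.exp s • w) =
      (∫ t in (0)..(2 * π), η (Circle.exp t, w)) - 2 * π * η (Circle.exp s, w) := by
    simp_rw [← hshift, Circle.exp_add, hadd]
    rw [intervalIntegral.integral_add]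
    · simp
    all_goals exact Continuous.intervalIntegrable (by fun_prop) _ _
  simp only [hint]
  field_simp

variable [PreconnectedSpace A]

theorem exists_int_forall_eq_mul_two_pi {f : A → ℝ} (hf : Continuous f)
    (h : ∀ x, Circle.exp (f x) = 1) : ∃ c : ℤ, ∀ x, f x = c * (2 * π) := by
  have hd : IsDiscrete (AddSubgroup.zmultiples (2 * π) : Set ℝ) :=
    isDiscrete_iff_discreteTopology.mpr
      (inferInstanceAs (DiscreteTopology (AddSubgroup.zmultiples (2 * π))))
  have hmem (x : A) : f x ∈ (AddSubgroup.zmultiples (2 * π) : Set ℝ) := by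
    obtain ⟨k, hk⟩ := Circle.exp_eq_one.mp (h x)
    exact ⟨k, by simp [hk]⟩
  obtain ⟨_, ⟨c, rfl⟩, hc⟩ := isPreconnected_univ.eqOn_const_of_mapsTo hd hf.continuousOn
    (fun x _ => hmem x) ⟨0, zero_mem _⟩
  exact ⟨c, fun x => by simpa using hc (mem_univ x)⟩

theorem exists_zpow_mul_exp_eq {χ : Circle × A → Circle} (hχ : Continuous χ)
    (hχ₁ : ∀ w, χ (1, w) = 1) :
    ∃ (c : ℤ) (η : Circle × A → ℝ), Continuous η ∧ (∀ w, η (1, w) = 0) ∧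
      ∀ a w, χ (a, w) = a ^ c * Circle.exp (η (a, w)) := by
  obtain ⟨θ, hθ, hexp⟩ := exists_continuous_exp_eq_comp_exp hχ hχ₁
  obtain ⟨c, hc⟩ := exists_int_forall_eq_mul_two_pi
    (f := fun p : ℝ × A => θ (p.1 + 2 * π, p.2) - θ p) (by fun_prop) fun p => by
      rw [Circle.exp_sub, hexp, hexp, Circle.exp_add_two_pi, div_self']
  let ξ : C(ℝ × A, ℝ) := ⟨fun p => θ p - θ (0, p.2) - c * p.1, by fun_prop⟩
  have hperiodic (w : A) : Function.Periodic (fun t => ξ (t, w)) (2 * π) := fun t => by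
    have h := hc (t, w)
    simp only [ξ, ContinuousMap.coe_mk]
    linear_combination h
  let q : C(ℝ × A, Circle × A) := .prodMap Circle.exp (.id A)
  have hq : Topology.IsQuotientMap q :=
    (IsOpenQuotientMap.prodMap ⟨Circle.exp_surjective, Circle.exp.continuous,
      Circle.isCoveringMap_exp.isOpenMap⟩ .id).isQuotientMap
  have hfactor : Function.FactorsThrough ξ q := by
    rintro ⟨s, w⟩ ⟨t, w'⟩ h
    obtain ⟨hst, rfl : w = w'⟩ := Prod.mk.inj h
    obtain ⟨k, rfl⟩ := Circle.exp_eq_exp.mp hst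
    exact (hperiodic w).int_mul k t
  have hlift (t : ℝ) (w : A) : hq.lift ξ hfactor (Circle.exp t, w) = ξ (t, w) :=
    DFunLike.congr_fun (hq.lift_comp ξ hfactor) (t, w)
  refine ⟨c, hq.lift ξ hfactor, ContinuousMap.continuous _, fun w => ?_, fun a w => ?_⟩
  · simpa [ξ] using hlift 0 w
  · obtain ⟨t, rfl⟩ := Circle.exp_surjective a
    rw [hlift, ← Circle.exp_intCast_mul]
    simp only [ξ, ContinuousMap.coe_mk]
    rw [Circle.exp_sub, Circle.exp_sub, hexp, hexp, Circle.exp_zero, hχ₁]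
    simp

theorem exists_zpow_mul_exp_eq_of_cocycle [MulAction Circle A] [ContinuousSMul Circle A]
    {χ : Circle × A → Circle} (hχ : Continuous χ)
    (hmul : ∀ a b w, χ (a * b, w) = χ (a, b • w) * χ (b, w)) :
    ∃ (c : ℤ) (ψ : A → ℝ), Continuous ψ ∧
      ∀ a w, χ (a, w) * Circle.exp (ψ (a • w)) = a ^ c * Circle.exp (ψ w) := by
  have hχ₁ (w : A) : χ (1, w) = 1 := by simpa using hmul 1 1 w
  obtain ⟨c, η, hη, hη₁, hχη⟩ := exists_zpow_mul_exp_eq hχ hχ₁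
  have hadd (a b : Circle) (w : A) : η (a * b, w) = η (a, b • w) + η (b, w) := by
    obtain ⟨k, hk⟩ := exists_int_forall_eq_mul_two_pi
      (f := fun p : Circle × Circle => η (p.1 * p.2, w) - η (p.1, p.2 • w) - η (p.2, w))
      (by fun_prop) fun ⟨a, b⟩ => by
        have h := hmul a b w
        simp only [hχη, mul_zpow] at h
        rw [Circle.exp_sub, Circle.exp_sub, div_div, div_eq_one]
        apply mul_left_cancel (a := a ^ c * b ^ c)
        rw [h, mul_mul_mul_comm]
    have h₁ := hk (1, 1)
    have hab := hk (a, b)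
    simp only [one_smul, mul_one, hη₁, sub_self] at h₁
    rw [← h₁] at hab
    linear_combination hab
  obtain ⟨ψ, hψ, hψη⟩ := exists_continuous_comp_smul_eq_sub hη hadd
  refine ⟨c, ψ, hψ, fun a w => ?_⟩
  rw [hχη, hψη, mul_assoc, ← Circle.exp_add, add_sub_cancel]

end CircleCocycles

section CircleHomogeneousFrames

variable {κ A E X S : Type*} [NormedAddCommGroup E] [InnerProductSpace ℂ E]

/-- The `i`-th member of the family `s` is homogeneous of weight `c i` under the circle action. -/
def IsCircleHomogeneous [MulAction Circle A] (c : κ → ℤ) (s : A → κ → E) : Prop :=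
  ∀ (a : Circle) (w : A) (i : κ), s (a • w) i = a ^ c i • s w i

theorem IsEigenframe.circle_smul {T : E →L[ℂ] E} {v : κ → E} (hv : IsEigenframe T v)
    (a : κ → Circle) : IsEigenframe T fun i => a i • v i := by
  simp only [Circle.smul_def]
  refine ⟨⟨fun i => ?_, fun i j hij => ?_⟩, fun i => (hv.2 i).smul (a i).norm_coe⟩
  · rw [norm_smul, (a i).norm_coe, hv.1.1 i, one_mul]
  · simp [inner_smul_left, inner_smul_right, hv.1.2 hij]

variable [TopologicalSpace X]

section BoundaryNormalization

variable [Fintype κ] [TopologicalSpace A]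

theorem inner_ne_zero_of_isUnitEigenvector [PreconnectedSpace X] {T : E →L[ℂ] E} {u : X → E}
    (hT : IsMultiplicityFree κ T) (hu : Continuous u) (huT : ∀ x, IsUnitEigenvector T (u x))
    (x y : X) : ⟪u x, u y⟫_ℂ ≠ 0 := by
  -- `‖⟪u x, u ·⟫‖` takes only the values `0` and `1`, so by connectedness it is constant
  intro hxy
  have hx : ‖⟪u x, u x⟫_ℂ‖ = 1 := by simp [inner_self_eq_norm_sq_to_K, (huT x).1]
  obtain ⟨z, hz⟩ := mem_range_of_exists_le_of_exists_ge (c := (1 / 2 : ℝ))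
    (f := fun z => ‖⟪u x, u z⟫_ℂ‖) (by fun_prop) ⟨y, by simp [hxy]⟩
    ⟨x, one_half_lt_one.le.trans hx.ge⟩
  simp only at hz
  have hne : ⟪u x, u z⟫_ℂ ≠ 0 := norm_ne_zero_iff.mp (by norm_num [hz])
  have hnorm := congrArg norm (hT.eq_inner_smul (huT x) (huT z) hne)
  rw [norm_smul, (huT x).1, (huT z).1, hz] at hnorm
  norm_num at hnorm

variable [MulAction Circle A] [ContinuousSMul Circle A]

theorem exists_cocycle_of_isUnitEigenvector {L : A → E →L[ℂ] E}
    (hmf : ∀ w, IsMultiplicityFree κ (L w)) (hL : ∀ (a : Circle) w, L (a • w) = L w)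
    {u : A → E} (hu : Continuous u) (huL : ∀ w, IsUnitEigenvector (L w) (u w)) :
    ∃ χ : Circle × A → Circle, Continuous χ ∧
      (∀ a w, u (a • w) = χ (a, w) • u w) ∧
      ∀ a b w, χ (a * b, w) = χ (a, b • w) * χ (b, w) := by
  have huL' (a : Circle) (w : A) : IsUnitEigenvector (L w) (u (a • w)) := hL a w ▸ huL (a • w)
  have hparallel (a : Circle) (w : A) : u (a • w) = ⟪u w, u (a • w)⟫_ℂ • u w := by
    refine (hmf w).eq_inner_smul (huL w) (huL' a w) ?_
    have h := inner_ne_zero_of_isUnitEigenvector (hmf w)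
      (hu.comp (continuous_id.smul continuous_const)) (fun a => huL' a w) 1 a
    simpa using h
  have hnorm (a : Circle) (w : A) : ‖⟪u w, u (a • w)⟫_ℂ‖ = 1 := by
    have h := congrArg norm (hparallel a w)
    rw [norm_smul, (huL w).1, (huL' a w).1, mul_one] at h
    exact h.symm
  refine ⟨fun p => ⟨⟪u p.2, u (p.1 • p.2)⟫_ℂ, mem_sphere_zero_iff_norm.mpr (hnorm p.1 p.2)⟩,
    Continuous.subtype_mk (by fun_prop) _, hparallel, fun a b w => Circle.ext ?_⟩
  have hne : u w ≠ 0 := norm_ne_zero_iff.mp ((huL w).1.trans_ne one_ne_zero)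
  apply smul_left_injective ℂ hne
  change ⟪u w, u ((a * b) • w)⟫_ℂ • u w =
    (⟪u (b • w), u (a • b • w)⟫_ℂ * ⟪u w, u (b • w)⟫_ℂ) • u w
  rw [← hparallel, mul_smul, mul_smul, ← hparallel, ← hparallel]

theorem exists_phase_of_isUnitEigenvector [PreconnectedSpace A] {L : A → E →L[ℂ] E}
    (hmf : ∀ w, IsMultiplicityFree κ (L w)) (hL : ∀ (a : Circle) w, L (a • w) = L w)
    {u : A → E} (hu : Continuous u) (huL : ∀ w, IsUnitEigenvector (L w) (u w)) :
    ∃ (c : ℤ) (ψ : C(A, ℝ)), ∀ (a : Circle) w,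
      Circle.exp (ψ (a • w)) • u (a • w) = a ^ c • Circle.exp (ψ w) • u w := by
  obtain ⟨χ, hχ, huχ, hmul⟩ := exists_cocycle_of_isUnitEigenvector hmf hL hu huL
  obtain ⟨c, ψ, hψ, h⟩ := exists_zpow_mul_exp_eq_of_cocycle hχ hmul
  refine ⟨c, ⟨ψ, hψ⟩, fun a w => ?_⟩
  rw [huχ, smul_smul, smul_smul, mul_comm]
  exact congrArg (· • u w) (h a w)

theorem HasContinuousEigenframe.exists_isCircleHomogeneous_comp [PreconnectedSpace A]
    [NormalSpace X] {i : A → X} (hi : Topology.IsClosedEmbedding i) {L : X → E →L[ℂ] E}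
    (hv : HasContinuousEigenframe κ L) (hmf : ∀ x, IsMultiplicityFree κ (L x))
    (hL : ∀ (a : Circle) w, L (i (a • w)) = L (i w)) :
    ∃ (v : X → κ → E) (c : κ → ℤ), Continuous v ∧ (∀ x, IsEigenframe (L x) (v x)) ∧
      IsCircleHomogeneous c (v ∘ i) := by
  obtain ⟨v, hv, hvL⟩ := hv
  choose c ψ hψ using fun j => exists_phase_of_isUnitEigenvector (fun w => hmf (i w)) hL
    (u := fun w => v (i w) j) (by have := hi.continuous; fun_prop) (fun w => (hvL (i w)).2 j)
  choose Ψ hΨ using fun j => (ψ j).exists_extension hi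
  refine ⟨fun x j => Circle.exp (Ψ j x) • v x j, c, ?_, fun x => (hvL x).circle_smul _,
    fun a w j => ?_⟩
  · fun_prop
  · have hext (w : A) : Ψ j (i w) = ψ j w := DFunLike.congr_fun (hΨ j) w
    simp only [Function.comp_apply, hext, hψ]

end BoundaryNormalization

theorem exists_isCircleHomogeneous_extension [CompactSpace X] [TopologicalSpace S]
    [T2Space S] [MulAction Circle S] [ContinuousSMul Circle S] [MulAction Circle A]
    {i : A → X} {h : X → S} (hh : Continuous h)
    (hcover : ∀ z, ∃ (a : Circle) (x : X), a • h x = z)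
    (hfiber : ∀ (a : Circle) x y, h y = a • h x →
      (a = 1 ∧ y = x) ∨ ∃ w, x = i w ∧ y = i (a • w))
    {v : X → κ → E} {c : κ → ℤ} (hv : Continuous v) (hvc : IsCircleHomogeneous c (v ∘ i)) :
    ∃ s : S → κ → E, Continuous s ∧ IsCircleHomogeneous c s ∧ ∀ x, s (h x) = v x := by
  let q : C(Circle × X, S) := ⟨fun p => p.1 • h p.2, by fun_prop⟩
  let t : C(Circle × X, κ → E) := ⟨fun p j => p.1 ^ c j • v p.2 j,
    continuous_pi fun j => (continuous_fst.zpow _).smul (by fun_prop)⟩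
  have hq : Topology.IsQuotientMap q := q.continuous.isClosedMap.isQuotientMap q.continuous
    fun z => let ⟨a, x, hz⟩ := hcover z; ⟨(a, x), hz⟩
  have hfactor : Function.FactorsThrough t q := by
    rintro ⟨a, x⟩ ⟨b, y⟩ hab
    have hab' : h y = (b⁻¹ * a) • h x := by rw [mul_smul, eq_inv_smul_iff]; exact hab.symm
    rcases hfiber _ x y hab' with ⟨hba, rfl⟩ | ⟨w, rfl, rfl⟩
    · rw [inv_mul_eq_one.mp hba]
    · funext j
      calc a ^ c j • v (i w) j = b ^ c j • (b⁻¹ * a) ^ c j • v (i w) j := by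
            rw [smul_smul, ← mul_zpow, mul_inv_cancel_left]
        _ = b ^ c j • v (i ((b⁻¹ * a) • w)) j := congrArg _ (hvc (b⁻¹ * a) w j).symm
  have hlift (a : Circle) (x : X) (j : κ) : hq.lift t hfactor (a • h x) j = a ^ c j • v x j :=
    congrFun (DFunLike.congr_fun (hq.lift_comp t hfactor) (a, x)) j
  refine ⟨hq.lift t hfactor, ContinuousMap.continuous _, fun a z j => ?_,
    fun x => funext fun j => ?_⟩
  · obtain ⟨b, x, rfl⟩ := hcover z
    rw [← mul_smul, hlift, hlift, mul_zpow, mul_smul]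
  · simpa using hlift 1 x j

end CircleHomogeneousFrames

section HemisphereChart

open Metric

noncomputable instance circleMulActionSphere {V : Type*} [SeminormedAddCommGroup V]
    [NormedSpace ℂ V] :
    MulAction Circle (sphere (0 : V) 1) :=
  inferInstanceAs <| MulAction (sphere (0 : ℂ) 1) (sphere (0 : V) 1)

instance circleContinuousSMulSphere {V : Type*} [SeminormedAddCommGroup V] [NormedSpace ℂ V] :
    ContinuousSMul Circle (sphere (0 : V) 1) :=
  inferInstanceAs <| ContinuousSMul (sphere (0 : ℂ) 1) (sphere (0 : V) 1)

variable {κ E H : Type*} [NormedAddCommGroup E] [InnerProductSpace ℂ E]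
  [NormedAddCommGroup H] [InnerProductSpace ℂ H]

theorem norm_add_smul_sq {e u : H} (he : ‖e‖ = 1) (hu : ⟪e, u⟫_ℂ = 0) (c : ℂ) :
    ‖u + c • e‖ ^ 2 = ‖u‖ ^ 2 + ‖c‖ ^ 2 := by
  rw [sq, norm_add_sq_eq_norm_sq_add_norm_sq_of_inner_eq_zero _ _
    (by rw [inner_smul_right, inner_eq_zero_symm.mp hu, mul_zero]), norm_smul, he, mul_one, sq, sq]

/-- The hemisphere of the unit sphere of `H` on which the coordinate along `e` is nonnegative,
parametrized by the unit ball of the orthogonal complement of `e`. -/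
noncomputable def hemisphereChart (e : sphere (0 : H) 1) (w : closedBall (0 : (ℂ ∙ (e : H))ᗮ) 1) :
    sphere (0 : H) 1 :=
  ⟨(w : (ℂ ∙ (e : H))ᗮ) + ((√(1 - ‖w.1‖ ^ 2) : ℝ) : ℂ) • (e : H), by
    have hw : 0 ≤ 1 - ‖w.1‖ ^ 2 := by
      nlinarith [mem_closedBall_zero_iff.mp w.2, norm_nonneg w.1]
    rw [mem_sphere_zero_iff_norm, ← sq_eq_sq₀ (norm_nonneg _) zero_le_one,
      norm_add_smul_sq (norm_eq_of_mem_sphere e)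
        (Submodule.mem_orthogonal_singleton_iff_inner_right.mp w.1.2),
      Complex.norm_real, Real.norm_eq_abs, sq_abs, Real.sq_sqrt hw, Submodule.coe_norm]
    ring⟩

variable (e : sphere (0 : H) 1)

theorem continuous_hemisphereChart : Continuous (hemisphereChart e) :=
  Continuous.subtype_mk (by fun_prop) _

theorem inner_hemisphereChart (w : closedBall (0 : (ℂ ∙ (e : H))ᗮ) 1) :
    ⟪(e : H), hemisphereChart e w⟫_ℂ = (√(1 - ‖w.1‖ ^ 2) : ℝ) := by
  rw [hemisphereChart, inner_add_right, Submodule.mem_orthogonal_singleton_iff_inner_right.mp w.1.2,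
    inner_smul_right, inner_self_eq_norm_sq_to_K, norm_eq_of_mem_sphere]
  simp

theorem exists_smul_hemisphereChart_eq (z : sphere (0 : H) 1) :
    ∃ (a : Circle) (x : closedBall (0 : (ℂ ∙ (e : H))ᗮ) 1), a • hemisphereChart e x = z := by
  obtain ⟨_, hc, u, hu, hz⟩ := (ℂ ∙ (e : H)).exists_add_mem_mem_orthogonal (z : H)
  obtain ⟨c, rfl⟩ := Submodule.mem_span_singleton.mp hc
  have hnorm : ‖u‖ ^ 2 + ‖c‖ ^ 2 = 1 := by
    rw [← norm_add_smul_sq (norm_eq_of_mem_sphere e)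
      (Submodule.mem_orthogonal_singleton_iff_inner_right.mp hu), add_comm, ← hz,
      norm_eq_of_mem_sphere, one_pow]
  let a := Circle.exp c.arg
  have ha : (a : ℂ) * ‖c‖ = c := by
    rw [Circle.coe_exp, mul_comm, Complex.norm_mul_exp_arg_mul_I]
  have hx : ‖a⁻¹ • (⟨u, hu⟩ : (ℂ ∙ (e : H))ᗮ)‖ ^ 2 = 1 - ‖c‖ ^ 2 := by
    rw [Circle.norm_smul, Submodule.coe_norm]
    exact eq_sub_of_add_eq hnorm
  refine ⟨a, ⟨a⁻¹ • ⟨u, hu⟩, ?_⟩, Subtype.ext ?_⟩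
  · rw [mem_closedBall_zero_iff, ← sq_le_one_iff₀ (norm_nonneg _), hx]
    nlinarith [sq_nonneg ‖c‖]
  · change a • (a⁻¹ • u + ((√(1 - ‖a⁻¹ • (⟨u, hu⟩ : (ℂ ∙ (e : H))ᗮ)‖ ^ 2) : ℝ) : ℂ) • (e : H)) = z
    rw [hx, sub_sub_cancel, Real.sqrt_sq (norm_nonneg c), smul_add, smul_inv_smul,
      Circle.smul_def, smul_smul, ha, hz, add_comm]

theorem eq_of_hemisphereChart_eq_smul {a : Circle} {x y : closedBall (0 : (ℂ ∙ (e : H))ᗮ) 1}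
    (h : hemisphereChart e y = a • hemisphereChart e x) :
    √(1 - ‖y.1‖ ^ 2) = (a : ℂ) * √(1 - ‖x.1‖ ^ 2) ∧ y.1 = (a : ℂ) • x.1 := by
  have hcoe : (hemisphereChart e y : H) = (a : ℂ) • (hemisphereChart e x : H) :=
    congrArg Subtype.val h
  have hlast : √(1 - ‖y.1‖ ^ 2) = (a : ℂ) * √(1 - ‖x.1‖ ^ 2) := by
    rw [← inner_hemisphereChart, hcoe, inner_smul_right, inner_hemisphereChart]
  refine ⟨hlast, Subtype.ext ?_⟩
  rw [hemisphereChart, hemisphereChart, smul_add, smul_smul, ← hlast] at hcoe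
  exact add_right_cancel hcoe

theorem eq_or_exists_of_hemisphereChart_eq_smul {a : Circle}
    {x y : closedBall (0 : (ℂ ∙ (e : H))ᗮ) 1}
    (h : hemisphereChart e y = a • hemisphereChart e x) :
    (a = 1 ∧ y = x) ∨ ∃ w : sphere (0 : (ℂ ∙ (e : H))ᗮ) 1,
      x = Set.inclusion sphere_subset_closedBall w ∧
        y = Set.inclusion sphere_subset_closedBall (a • w) := by
  obtain ⟨hlast, hyx⟩ := eq_of_hemisphereChart_eq_smul e h
  by_cases hx : ‖x.1‖ = 1
  · exact .inr ⟨⟨x.1, mem_sphere_zero_iff_norm.mpr hx⟩, rfl, Subtype.ext hyx⟩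
  · have hpos : 0 < 1 - ‖x.1‖ ^ 2 := by
      nlinarith [(mem_closedBall_zero_iff.mp x.2).lt_of_ne hx, norm_nonneg x.1]
    have hne : ((√(1 - ‖x.1‖ ^ 2) : ℝ) : ℂ) ≠ 0 := by exact_mod_cast (Real.sqrt_pos.mpr hpos).ne'
    have ha : (a : ℂ) = 1 := by
      rw [hyx, norm_smul, Circle.norm_coe, one_mul] at hlast
      exact (mul_eq_right₀ hne).mp hlast.symm
    exact .inl ⟨Circle.ext ha, Subtype.ext (by rw [hyx, ha, one_smul])⟩

theorem hemisphereChart_inclusion_smul (a : Circle) (w : sphere (0 : (ℂ ∙ (e : H))ᗮ) 1) :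
    hemisphereChart e (Set.inclusion sphere_subset_closedBall (a • w)) =
      a • hemisphereChart e (Set.inclusion sphere_subset_closedBall w) := by
  have hchart (w : sphere (0 : (ℂ ∙ (e : H))ᗮ) 1) :
      (hemisphereChart e (Set.inclusion sphere_subset_closedBall w) : H) = w.1 := by
    simp [hemisphereChart]
  refine Subtype.ext ((hchart (a • w)).trans ?_)
  change _ = (a : ℂ) • (hemisphereChart e (Set.inclusion sphere_subset_closedBall w) : H)
  rw [hchart]
  rfl

theorem preconnectedSpace_sphere_orthogonal [FiniteDimensional ℂ H]
    (hH : 2 ≤ Module.finrank ℂ H) : PreconnectedSpace (sphere (0 : (ℂ ∙ (e : H))ᗮ) 1) := by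
  rw [← isPreconnected_iff_preconnectedSpace]
  apply isPreconnected_sphere
  have hsum := (ℂ ∙ (e : H)).finrank_add_finrank_orthogonal
  rw [finrank_span_singleton (ne_zero_of_mem_unit_sphere e)] at hsum
  rw [← Module.finrank_eq_rank, finrank_real_of_complex]
  exact_mod_cast (by omega : 1 < 2 * Module.finrank ℂ (ℂ ∙ (e : H))ᗮ)

variable [Fintype κ] [FiniteDimensional ℂ E]

theorem exists_isCircleHomogeneous_eigenframe [FiniteDimensional ℂ H]
    (hH : 2 ≤ Module.finrank ℂ H) {L : sphere (0 : H) 1 → E →L[ℂ] E} (hL : Continuous L)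
    (hmf : ∀ z, IsMultiplicityFree κ (L z)) (hinv : ∀ (a : Circle) z, L (a • z) = L z) :
    ∃ (s : sphere (0 : H) 1 → κ → E) (c : κ → ℤ), Continuous s ∧ (∀ z, IsEigenframe (L z) (s z)) ∧
      IsCircleHomogeneous c s := by
  have : Nontrivial H := Module.nontrivial_of_finrank_pos (zero_lt_two.trans_le hH)
  obtain ⟨e, he⟩ := (NormedSpace.sphere_nonempty (E := H) (x := 0) (r := 1)).mpr zero_le_one
  lift e to sphere (0 : H) 1 using he
  have : ProperSpace (ℂ ∙ (e : H))ᗮ := FiniteDimensional.proper_rclike ℂ _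
  have : ContractibleSpace (closedBall (0 : (ℂ ∙ (e : H))ᗮ) 1) :=
    (convex_closedBall _ _).contractibleSpace ⟨0, mem_closedBall_self zero_le_one⟩
  have := preconnectedSpace_sphere_orthogonal e hH
  obtain ⟨v, c, hv, hvL, hvc⟩ := HasContinuousEigenframe.exists_isCircleHomogeneous_comp
    (i := Set.inclusion sphere_subset_closedBall)
    (.inclusion _ (isClosed_sphere.preimage continuous_subtype_val))
    (HasContinuousEigenframe.of_contractibleSpace (hL.comp (continuous_hemisphereChart e))
      fun x => hmf _) (fun x => hmf _) fun a w => by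
        simp only [Function.comp_apply, hemisphereChart_inclusion_smul, hinv]
  obtain ⟨s, hs, hsc, hsv⟩ := exists_isCircleHomogeneous_extension (continuous_hemisphereChart e)
    (exists_smul_hemisphereChart_eq e) (fun _ _ _ => eq_or_exists_of_hemisphereChart_eq_smul e)
    hv hvc
  refine ⟨s, c, hs, fun z => ?_, hsc⟩
  obtain ⟨a, x, rfl⟩ := exists_smul_hemisphereChart_eq e z
  have hsx : s (a • hemisphereChart e x) = fun i => a ^ c i • v x i := by
    funext i
    rw [hsc, hsv]
  rw [hinv, hsx]
  exact (hvL x).circle_smul _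

end HemisphereChart

section NormalMatrices

variable {κ E : Type*} [NormedAddCommGroup E] [InnerProductSpace ℂ E] {T : E →L[ℂ] E}

theorem adjoint_apply_eq_conj_smul_of_isStarNormal [CompleteSpace E] (hT : IsStarNormal T) {v : E}
    {a : ℂ} (hv : T v = a • v) : T.adjoint v = star a • v := by
  have hnormal : IsStarNormal (T - a • 1) := by
    have hcomm : star T * T = T * star T := hT.star_comm_self
    refine ⟨?_⟩
    simp only [Commute, SemiconjBy, star_sub, star_smul, star_one, sub_mul, mul_sub, hcomm,
      smul_mul_assoc, mul_smul_comm, one_mul, mul_one, smul_sub,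
      smul_comm a (star a) (1 : E →L[ℂ] E)]
    abel
  have h : (T - a • 1).adjoint v = 0 :=
    (ContinuousLinearMap.IsStarNormal.adjoint_apply_eq_zero_iff hnormal v).mpr (by simp [hv])
  rwa [← ContinuousLinearMap.star_eq_adjoint, star_sub, star_smul, star_one,
    _root_.sub_apply, ContinuousLinearMap.star_eq_adjoint, sub_eq_zero] at h

theorem inner_eq_zero_of_isStarNormal [CompleteSpace E] (hT : IsStarNormal T) {v w : E} {a b : ℂ}
    (hv : T v = a • v) (hw : T w = b • w) (hab : a ≠ b) : ⟪v, w⟫_ℂ = 0 := by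
  have h := T.adjoint_inner_left w v
  rw [adjoint_apply_eq_conj_smul_of_isStarNormal hT hv, hw, inner_smul_left, inner_smul_right,
    starRingEnd_apply, star_star] at h
  exact (mul_eq_mul_right_iff.mp h).resolve_left hab

theorem IsMultiplicityFree.of_isStarNormal [Fintype κ] [FiniteDimensional ℂ E]
    (hT : IsStarNormal T) (hκ : Fintype.card κ = Module.finrank ℂ E) {μ : κ → ℂ}
    (hμ : Function.Injective μ) (h : ∀ i, ∃ v ≠ 0, T v = μ i • v) : IsMultiplicityFree κ T := by
  have : CompleteSpace E := FiniteDimensional.complete ℂ E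
  choose v hv hTv using h
  have hT' (i : κ) : T ((‖v i‖⁻¹ : ℂ) • v i) = μ i • (‖v i‖⁻¹ : ℂ) • v i := by
    rw [map_smul, hTv, smul_comm]
  have hon : Orthonormal ℂ fun i => (‖v i‖⁻¹ : ℂ) • v i :=
    ⟨fun i => norm_smul_inv_norm (hv i), fun i j hij =>
      inner_eq_zero_of_isStarNormal hT (hT' i) (hT' j) (hμ.ne hij)⟩
  refine ⟨.mk hon (hon.linearIndependent.span_eq_top_of_card_eq_finrank' hκ).ge, μ, hμ,
    fun i => ?_⟩
  rw [OrthonormalBasis.coe_mk]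
  exact hT' i

/-- The matrix whose columns are the vectors `v i`. -/
def columnMatrix (v : κ → EuclideanSpace ℂ κ) : Matrix κ κ ℂ := .of fun l i => v i l

theorem continuous_columnMatrix : Continuous (columnMatrix (κ := κ)) :=
  continuous_matrix fun l i => (PiLp.continuous_apply 2 _ l).comp (continuous_apply i)

variable [Fintype κ] [DecidableEq κ] {B : Matrix κ κ ℂ}

theorem exists_toEuclideanCLM_eq_smul_of_det_eq_zero {a : ℂ} (h : (a • 1 - B).det = 0) :
    ∃ v ≠ 0, toEuclideanCLM (𝕜 := ℂ) B v = a • v := by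
  obtain ⟨v, hv, hBv⟩ := exists_mulVec_eq_zero_iff.mpr h
  rw [sub_mulVec, smul_mulVec, one_mulVec, sub_eq_zero] at hBv
  exact ⟨.toLp 2 v, by simpa using hv, by rw [toEuclideanCLM_toLp, ← hBv]; rfl⟩

theorem isMultiplicityFree_toEuclideanCLM (hB : B * Bᴴ = Bᴴ * B) {μ : κ → ℂ}
    (hμ : Function.Injective μ) (hdet : ∀ i, (μ i • 1 - B).det = 0) :
    IsMultiplicityFree κ (toEuclideanCLM (𝕜 := ℂ) B) := by
  have : IsStarNormal B := ⟨hB.symm⟩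
  exact .of_isStarNormal (.map _ B) (by simp) hμ fun i =>
    exists_toEuclideanCLM_eq_smul_of_det_eq_zero (hdet i)

theorem continuous_toEuclideanCLM : Continuous (toEuclideanCLM (n := κ) (𝕜 := ℂ)) :=
  (toEuclideanCLM (n := κ) (𝕜 := ℂ)).toAlgEquiv.toLinearMap.continuous_of_finiteDimensional

theorem conjTranspose_columnMatrix_mul_mul_apply (B : Matrix κ κ ℂ) (v : κ → EuclideanSpace ℂ κ)
    (i j : κ) : ((columnMatrix v)ᴴ * B * columnMatrix v) i j =
      ⟪v i, toEuclideanCLM (𝕜 := ℂ) B (v j)⟫_ℂ := by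
  rw [Matrix.mul_assoc, Matrix.mul_apply, PiLp.inner_apply]
  refine Finset.sum_congr rfl fun l _ => ?_
  rw [RCLike.inner_apply, mul_comm]
  rfl

theorem conjTranspose_columnMatrix_mul_self {v : κ → EuclideanSpace ℂ κ} (hv : Orthonormal ℂ v) :
    (columnMatrix v)ᴴ * columnMatrix v = 1 := by
  ext i j
  have h := conjTranspose_columnMatrix_mul_mul_apply 1 v i j
  rw [Matrix.mul_one, map_one, one_apply_eq_self, orthonormal_iff_ite.mp hv] at h
  rw [h, Matrix.one_apply]

theorem IsEigenframe.isDiag {v : κ → EuclideanSpace ℂ κ}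
    (hv : IsEigenframe (toEuclideanCLM (𝕜 := ℂ) B) v) :
    ((columnMatrix v)ᴴ * B * columnMatrix v).IsDiag := fun i j hij =>
  (conjTranspose_columnMatrix_mul_mul_apply B v i j).trans <| by
    rw [(hv.2 j).2, inner_smul_right, hv.1.2 hij, mul_zero]

end NormalMatrices

section ProjectiveSpace

open Metric

namespace ComplexSphere

variable {ι : Type*} [Fintype ι]

/-- The Hopf fibration, whose fibres are the orbits of the circle action. -/
noncomputable def toProjectivization (z : ComplexSphere ι) : Projectivization ℂ (ι → ℂ) :=
  .mk ℂ z.1.ofLp fun h => ne_zero_of_mem_unit_sphere z (by simpa using h)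

theorem toProjectivization_eq_iff {z w : ComplexSphere ι} :
    z.toProjectivization = w.toProjectivization ↔ ∃ a : Circle, a • w = z := by
  rw [toProjectivization, toProjectivization, Projectivization.mk_eq_mk_iff']
  constructor
  · rintro ⟨a, ha⟩
    have ha' : a • w.1 = z.1 := WithLp.ofLp_injective 2 ha
    have hnorm : ‖a‖ = 1 := by
      have h := congrArg norm ha'
      rwa [norm_smul, norm_eq_of_mem_sphere, norm_eq_of_mem_sphere, mul_one] at h
    exact ⟨⟨a, mem_sphere_zero_iff_norm.mpr hnorm⟩, Subtype.ext ha'⟩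
  · rintro ⟨a, rfl⟩
    exact ⟨a, rfl⟩

theorem isQuotientMap_toProjectivization :
    Topology.IsQuotientMap (toProjectivization (ι := ι)) := by
  have hmk : Topology.IsQuotientMap (Projectivization.mk' ℂ (V := ι → ℂ)) := isQuotientMap_quot_mk
  let normalize (v : {v : ι → ℂ // v ≠ 0}) : ComplexSphere ι :=
    ⟨(‖WithLp.toLp 2 v.1‖⁻¹ : ℂ) • .toLp 2 v.1, by
      simpa using norm_smul_inv_norm (𝕜 := ℂ) (by simpa using v.2 : WithLp.toLp 2 v.1 ≠ 0)⟩
  have hnormalize : Continuous normalize := by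
    have htoLp : Continuous fun v : {v : ι → ℂ // v ≠ 0} => WithLp.toLp 2 v.1 := by fun_prop
    have hnorm (v : {v : ι → ℂ // v ≠ 0}) : (‖WithLp.toLp 2 v.1‖ : ℂ) ≠ 0 := by simpa using v.2
    exact .subtype_mk (.smul (.inv₀ (Complex.continuous_ofReal.comp htoLp.norm) hnorm) htoLp) _
  have hcomp : toProjectivization ∘ normalize = Projectivization.mk' ℂ := by
    funext v
    exact (Projectivization.mk_eq_mk_iff' ..).mpr ⟨_, rfl⟩
  refine .of_comp hnormalize ?_ (hcomp ▸ hmk)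
  exact hmk.continuous.comp (.subtype_mk (by fun_prop) _)

theorem exists_circle_invariant_eigenframe {κ : Type*} [Fintype κ]
    (hι : 3 ≤ Fintype.card ι)
    {L : ComplexSphere ι → EuclideanSpace ℂ κ →L[ℂ] EuclideanSpace ℂ κ} (hL : Continuous L)
    (hmf : ∀ z, IsMultiplicityFree κ (L z)) (hinv : ∀ (a : Circle) z, L (a • z) = L z) :
    ∃ s : ComplexSphere ι → κ → EuclideanSpace ℂ κ, Continuous s ∧
      (∀ z, IsEigenframe (L z) (s z)) ∧ ∀ (a : Circle) z, s (a • z) = s z := by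
  classical
  obtain ⟨s, c, hs, hsL, hsc⟩ := exists_isCircleHomogeneous_eigenframe
    (by rw [finrank_euclideanSpace]; omega) hL hmf hinv
  let V : Matrix κ κ C(ComplexSphere ι, ℂ) := .of fun l i => ⟨fun z => s z i l, by fun_prop⟩
  have hV : Vᴴ * V = 1 := by
    ext i j z
    have h := congrFun₂ (conjTranspose_columnMatrix_mul_self (hsL z).1) i j
    rw [Matrix.mul_apply] at h ⊢
    rw [ContinuousMap.sum_apply, Matrix.one_apply, apply_ite (fun f : C(_, ℂ) => f z)]
    exact h
  have hw (l i : κ) : V l i ∈ weightSpace 1 (c i) := fun a z => by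
    have ha : torusRotation (fun j => a ^ (1 : ι → ℤ) j) z = a • z := by
      simp only [Pi.one_apply, zpow_one]
      rfl
    change s _ i l = _ * s z i l
    rw [ha, hsc, Circle.smul_def, Circle.coe_zpow]
    rfl
  have hc : c = 0 := eq_zero_of_forall_mem_weightSpace hι hV hw
  refine ⟨s, hs, hsL, fun a z => funext fun i => ?_⟩
  rw [hsc, hc, Pi.zero_apply, zpow_zero, one_smul]

end ComplexSphere

end ProjectiveSpace

/-- Every continuous, pointwise normal, multiplicity-free matrix over `ℂP^m`, `m ≥ 2`,
is diagonalizable by a continuous unitary. -/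
theorem stmt_0 (m n : ℕ) (hm : 2 ≤ m) (hn : 1 ≤ n)
    (A : Projectivization ℂ (Fin (m + 1) → ℂ) → Matrix (Fin n) (Fin n) ℂ)
    (hA : Continuous A)
    (hnormal : ∀ x, A x * (A x)ᴴ = (A x)ᴴ * A x)
    (hmf : ∀ x, ∃ μ : Fin n → ℂ, Function.Injective μ ∧
      ∀ t : ℂ, (t • (1 : Matrix (Fin n) (Fin n) ℂ) - A x).det = ∏ i, (t - μ i)) :
    ∃ U : Projectivization ℂ (Fin (m + 1) → ℂ) → Matrix (Fin n) (Fin n) ℂ,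
      Continuous U ∧ (∀ x, (U x)ᴴ * U x = 1) ∧
      ∀ x, ((U x)ᴴ * A x * U x).IsDiag := by
  have hπ := ComplexSphere.isQuotientMap_toProjectivization (ι := Fin (m + 1))
  have hmf' (x) : IsMultiplicityFree (Fin n) (toEuclideanCLM (𝕜 := ℂ) (A x)) := by
    obtain ⟨μ, hμ, hdet⟩ := hmf x
    exact isMultiplicityFree_toEuclideanCLM (hnormal x) hμ fun i => by
      rw [hdet, Finset.prod_eq_zero (Finset.mem_univ i) (sub_self _)]
  obtain ⟨s, hs, hsA, hinv⟩ := ComplexSphere.exists_circle_invariant_eigenframe (by simp; omega)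
    (L := fun z => toEuclideanCLM (𝕜 := ℂ) (A z.toProjectivization))
    (continuous_toEuclideanCLM.comp (hA.comp hπ.continuous)) (fun z => hmf' _) fun a z => by
      rw [ComplexSphere.toProjectivization_eq_iff.mpr ⟨a, rfl⟩]
  have hdescend (z) : s (Function.surjInv hπ.surjective z.toProjectivization) = s z := by
    obtain ⟨a, ha⟩ := ComplexSphere.toProjectivization_eq_iff.mp
      (Function.surjInv_eq hπ.surjective z.toProjectivization)
    rw [← ha, hinv]
  refine ⟨fun x => columnMatrix (s (Function.surjInv hπ.surjective x)), hπ.continuous_iff.mpr ?_,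
    fun x => conjTranspose_columnMatrix_mul_self (hsA _).1, fun x => ?_⟩
  · simp only [Function.comp_def, hdescend]
    exact continuous_columnMatrix.comp hs
  · have h := (hsA (Function.surjInv hπ.surjective x)).isDiag
    rwa [Function.surjInv_eq hπ.surjective] at h
end

section
/- Let S² denote the unit sphere in ℝ³ and X = S² × S² with the product topology. Let λ_1, λ_2 : X → ℂ be continuous functions with λ_1(x) ≠ λ_2(x) for every x ∈ X. Then the set of unitary equivalence classes of continuous maps A : X → M(2,ℂ) such that A(x) is normal and det(t·I − A(x)) = (t − λ_1(x))(t − λ_2(x)) for all x is infinite. -/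
open Matrix

/-- The unit 2-sphere in `ℝ³`. -/
def Sphere2 : Type := {p : ℝ × ℝ × ℝ // p.1 ^ 2 + p.2.1 ^ 2 + p.2.2 ^ 2 = 1}

instance : TopologicalSpace Sphere2 :=
  inferInstanceAs (TopologicalSpace {p : ℝ × ℝ × ℝ // p.1 ^ 2 + p.2.1 ^ 2 + p.2.2 ^ 2 = 1})

/-- Unitary equivalence of matrices over a topological space `X`. -/
def UnitarilyEquiv {X : Type*} [TopologicalSpace X] {n : ℕ}
    (A B : X → Matrix (Fin n) (Fin n) ℂ) : Prop :=
  ∃ U : X → Matrix (Fin n) (Fin n) ℂ, Continuous U ∧ (∀ x, (U x)ᴴ * U x = 1) ∧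
    ∀ x, B x = (U x)ᴴ * A x * U x

/-- The set of continuous normal `2 × 2` matrices over `S² × S²` with characteristic
polynomial `(t - λ₁(x))(t - λ₂(x))`. -/
def NormalWithTwoEigenvalues (l₁ l₂ : Sphere2 × Sphere2 → ℂ) :
    Set (Sphere2 × Sphere2 → Matrix (Fin 2) (Fin 2) ℂ) :=
  {A | Continuous A ∧ (∀ x, A x * (A x)ᴴ = (A x)ᴴ * A x) ∧
    ∀ x, ∀ t : ℂ, (t • (1 : Matrix (Fin 2) (Fin 2) ℂ) - A x).det = (t - l₁ x) * (t - l₂ x)}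

/-!
Over the sphere, let `P n` be the rank-one projection proportional to the matrix with rows
`((1 + t) ^ n, z ^ n)` and `(conj z ^ n, (1 - t) ^ n)`, where `z = x + iy`; it is singular because
`|z| ^ 2 = (1 + t) * (1 - t)`. The normal matrices `l₁ P n + l₂ (1 - P n)`, pulled back along
`X → S²`, all have eigenvalues `l₁, l₂`, and since `l₁ ≠ l₂` a unitary equivalence between two of
them intertwines `P n` with `P m`. The `(0, 0)` entry of `P n * U = U * P m` vanishes nowhere north
of the south pole, and the `(1, 1)` entry nowhere south of the north pole. On the equator their
ratio is `z ^ (m - n)`, while both extend without zeros over discs, so `m = n` by winding numbers.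
-/

theorem eq_zero_of_eqOn_circle_zpow {F : ℂ → ℂ} (hF : Continuous F) (hF₀ : ∀ z, F z ≠ 0) {k : ℤ}
    (h : ∀ z, ‖z‖ = 1 → F z = z ^ k) : k = 0 := by
  obtain ⟨f, ⟨-, hf⟩, -⟩ := Complex.isCoveringMapOn_exp.existsUnique_continuousMap_lifts
    (⟨F, hF⟩ : C(ℂ, ℂ)) (Complex.exp_log (hF₀ 0)) hF₀
  have hexp (z : ℂ) : Complex.exp (f z) = F z := congrFun hf z
  let circle (θ : ℝ) : ℂ := Complex.exp (θ * Complex.I)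
  have hcircle : Continuous circle := by fun_prop
  -- Both sides lift the loop `F ∘ circle` through `exp`, and they agree at `θ = 0`.
  have hlift : (fun θ => f (circle θ)) = fun θ : ℝ => f 1 + k * (θ * Complex.I) := by
    refine Complex.isCoveringMap_exp.eq_of_comp_eq
      (f.continuous.comp hcircle) (by fun_prop) ?_ 0 (by simp [circle])
    funext θ
    apply Subtype.ext
    simp [Complex.exp_add, Complex.exp_int_mul, hexp, h, circle, Complex.norm_exp_ofReal_mul_I]
  simpa [circle, Real.pi_ne_zero] using congrFun hlift (2 * Real.pi)

namespace UnitarilyEquiv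

variable {X : Type*} [TopologicalSpace X] {n : ℕ} {A B C : X → Matrix (Fin n) (Fin n) ℂ}

theorem refl (A : X → Matrix (Fin n) (Fin n) ℂ) : UnitarilyEquiv A A :=
  ⟨fun _ => 1, continuous_const, by simp, by simp⟩

theorem exists_intertwining (h : UnitarilyEquiv A B) :
    ∃ U : X → Matrix (Fin n) (Fin n) ℂ, Continuous U ∧ (∀ x, IsUnit (U x)) ∧
      ∀ x, A x * U x = U x * B x := by
  obtain ⟨U, hU, hUU, hB⟩ := h
  refine ⟨U, hU, fun x => IsUnit.of_mul_eq_one_right _ (hUU x), fun x => ?_⟩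
  rw [hB, mul_assoc, ← mul_assoc (U x), mul_eq_one_comm.1 (hUU x), one_mul]

theorem symm (h : UnitarilyEquiv A B) : UnitarilyEquiv B A := by
  obtain ⟨U, hU, hUU, hB⟩ := h
  have hUU' (x : X) : U x * (U x)ᴴ = 1 := mul_eq_one_comm.1 (hUU x)
  refine ⟨fun x => (U x)ᴴ, hU.matrix_conjTranspose, by simpa using hUU', fun x => ?_⟩
  calc A x = (U x * (U x)ᴴ) * A x * (U x * (U x)ᴴ) := by simp [hUU']
    _ = (U x)ᴴᴴ * B x * (U x)ᴴ := by simp only [hB, conjTranspose_conjTranspose, mul_assoc]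

theorem trans (hAB : UnitarilyEquiv A B) (hBC : UnitarilyEquiv B C) : UnitarilyEquiv A C := by
  obtain ⟨U, hU, hUU, hB⟩ := hAB
  obtain ⟨V, hV, hVV, hC⟩ := hBC
  refine ⟨fun x => U x * V x, hU.matrix_mul hV, fun x => ?_, fun x => ?_⟩
  · calc (U x * V x)ᴴ * (U x * V x) = (V x)ᴴ * ((U x)ᴴ * U x) * V x := by
          simp only [conjTranspose_mul, mul_assoc]
      _ = 1 := by rw [hUU, mul_one, hVV]
  · simp only [hC, hB, conjTranspose_mul, mul_assoc]

theorem equivalence : Equivalence (UnitarilyEquiv (X := X) (n := n)) :=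
  ⟨refl, symm, trans⟩

end UnitarilyEquiv

section SpectralSum

/-- The element with eigenvalue `a` on the range of an idempotent `P` and `b` on its kernel. -/
def spectralSum {R A : Type*} [Ring A] [SMul R A] (a b : R) (P : A) : A :=
  a • P + b • (1 - P)

theorem isStarNormal_spectralSum {R A : Type*} [CommSemiring R] [Star R] [Ring A] [StarRing A]
    [Algebra R A] [StarModule R A] (a b : R) {P : A} (hP : IsSelfAdjoint P) :
    IsStarNormal (spectralSum a b P) := by
  have hPnormal : IsStarNormal P := hP.isStarNormal
  have hcomm : Commute P (1 - P) := (Commute.one_right P).sub_right (Commute.refl P)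
  refine Commute.isStarNormal_add ?_
  rw [star_smul, star_sub, star_one, hP.star_eq]
  exact (hcomm.smul_left a).smul_right (star b)

theorem mul_eq_mul_of_spectralSum_mul_eq {K A : Type*} [Field K] [Ring A] [Algebra K A] {a b : K}
    (hab : a ≠ b) {P Q U : A} (h : spectralSum a b P * U = U * spectralSum a b Q) :
    P * U = U * Q := by
  have hsum (T : A) : spectralSum a b T = (a - b) • T + b • 1 := by
    simp only [spectralSum, sub_smul, smul_sub]
    abel
  simpa [hsum, add_mul, mul_add, sub_ne_zero.2 hab] using h

theorem det_smul_one_sub_spectralSum {R : Type*} [CommRing R] (a b t : R)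
    {P : Matrix (Fin 2) (Fin 2) R} (htrace : P.trace = 1) (hdet : P.det = 0) :
    (t • (1 : Matrix (Fin 2) (Fin 2) R) - spectralSum a b P).det = (t - a) * (t - b) := by
  rw [trace_fin_two] at htrace
  rw [det_fin_two] at hdet ⊢
  simp only [spectralSum, Matrix.sub_apply, Matrix.add_apply, Matrix.smul_apply, smul_eq_mul,
    one_apply_eq, one_apply_ne, ne_eq, zero_ne_one, one_ne_zero, not_false_eq_true]
  linear_combination (a - b) ^ 2 * hdet - (a - b) * (t - b) * htrace

end SpectralSum

theorem mul_apply_self_ne_zero_of_mul_eq_mul {ι R : Type*} [Fintype ι] [DecidableEq ι] [CommRing R]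
    [IsDomain R] {P Q U : Matrix ι ι R} {i : ι} (hP : ∀ k l, P i i * P k l = P k i * P i l)
    (hU : IsUnit U) (h : P * U = U * Q) (hPi : P i i ≠ 0) (hQi : Q i i ≠ 0) :
    (P * U) i i ≠ 0 := by
  intro hzero
  have hcol : (P * U).col i = 0 := by
    funext k
    apply mul_left_cancel₀ hPi
    calc P i i * (P * U) k i = P k i * (P * U) i i := by
          simp only [mul_apply, Finset.mul_sum, ← mul_assoc, hP]
      _ = P i i * 0 := by rw [hzero, mul_zero, mul_zero]
  have hQcol : U *ᵥ Q.col i = U *ᵥ 0 := by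
    rw [mulVec_zero, ← hcol, h]
    rfl
  exact hQi (congrFun (mulVec_injective_of_isUnit hU hQcol) i)

theorem mul_apply_eq_mul_apply_of_det_eq_zero {R : Type*} [CommRing R]
    {P : Matrix (Fin 2) (Fin 2) R} (hP : P.det = 0) (i j k l : Fin 2) :
    P i j * P k l = P k j * P i l := by
  rw [det_fin_two] at hP
  fin_cases i <;> fin_cases j <;> fin_cases k <;> fin_cases l <;> simp <;> grind

namespace Sphere2

/-- The complex coordinate `x + iy` of a point `(x, y, t)` of the sphere. -/
noncomputable def horizontal (p : Sphere2) : ℂ := p.1.1 + p.1.2.1 * Complex.I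

/-- The coordinate `t` of a point `(x, y, t)` of the sphere. -/
def height (p : Sphere2) : ℝ := p.1.2.2

theorem continuous_horizontal : Continuous horizontal := by
  have : Continuous fun p : Sphere2 => p.1 := continuous_subtype_val
  unfold horizontal
  fun_prop

theorem continuous_height : Continuous height := by
  have : Continuous fun p : Sphere2 => p.1 := continuous_subtype_val
  unfold height
  fun_prop

theorem horizontal_mul_star (p : Sphere2) :
    horizontal p * star (horizontal p) = (1 + height p) * (1 - height p) := by
  have h : Complex.normSq (horizontal p) = (1 + height p) * (1 - height p) := by
    rw [horizontal, height, Complex.normSq_add_mul_I]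
    linear_combination p.2
  rw [Complex.star_def, Complex.mul_conj, h]
  push_cast
  rfl

theorem abs_height_le_one (p : Sphere2) : |height p| ≤ 1 := by
  have h : p.1.1 ^ 2 + p.1.2.1 ^ 2 + height p ^ 2 = 1 := p.2
  rw [← sq_le_one_iff_abs_le_one]
  nlinarith [sq_nonneg p.1.1, sq_nonneg p.1.2.1]

/-- Inverse stereographic projection from the south pole. -/
noncomputable def invStereographic (z : ℂ) : Sphere2 :=
  ⟨(2 * z.re / (1 + ‖z‖ ^ 2), 2 * z.im / (1 + ‖z‖ ^ 2), (1 - ‖z‖ ^ 2) / (1 + ‖z‖ ^ 2)), by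
    have hden : 1 + ‖z‖ ^ 2 ≠ 0 := by positivity
    have hz : ‖z‖ ^ 2 = z.re ^ 2 + z.im ^ 2 := by
      rw [← Complex.normSq_eq_norm_sq, Complex.normSq_apply, sq, sq]
    field_simp
    linear_combination -4 * hz⟩

/-- Reflection of the sphere in its equatorial plane. -/
def reflect (p : Sphere2) : Sphere2 :=
  ⟨(p.1.1, p.1.2.1, -p.1.2.2), by simpa only [neg_sq] using p.2⟩

theorem continuous_invStereographic : Continuous invStereographic := by
  have hden (z : ℂ) : 1 + ‖z‖ ^ 2 ≠ 0 := by positivity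
  refine Continuous.subtype_mk ?_ _
  fun_prop (disch := exact hden _)

theorem continuous_reflect : Continuous reflect := by
  have : Continuous fun p : Sphere2 => p.1 := continuous_subtype_val
  refine Continuous.subtype_mk ?_ _
  fun_prop

theorem height_reflect (p : Sphere2) : height (reflect p) = -height p := rfl

theorem neg_one_lt_height_invStereographic (z : ℂ) : -1 < height (invStereographic z) := by
  change -1 < (1 - ‖z‖ ^ 2) / (1 + ‖z‖ ^ 2)
  rw [lt_div_iff₀ (by positivity)]
  linarith

section UnitCircle

variable {z : ℂ} (hz : ‖z‖ = 1)
include hz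

theorem horizontal_invStereographic_of_norm_eq_one : horizontal (invStereographic z) = z := by
  simp only [horizontal, invStereographic, hz]
  norm_num

theorem height_invStereographic_of_norm_eq_one : height (invStereographic z) = 0 := by
  simp [height, invStereographic, hz]

theorem reflect_invStereographic_of_norm_eq_one :
    reflect (invStereographic z) = invStereographic z := by
  apply Subtype.ext
  simp [reflect, invStereographic, hz]

end UnitCircle

end Sphere2

open Sphere2

/-- The trace of the unnormalized Hermitian matrix in `lineProjection`. -/
noncomputable def lineWeight (n : ℕ) (p : Sphere2) : ℝ := (1 + height p) ^ n + (1 - height p) ^ n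

/-- The orthogonal projection onto the fibre at `p` of a line bundle over the sphere whose
clutching function along the equator is `z ↦ z ^ n`. -/
noncomputable def lineProjection (n : ℕ) (p : Sphere2) : Matrix (Fin 2) (Fin 2) ℂ :=
  (lineWeight n p : ℂ)⁻¹ • !![(1 + height p : ℂ) ^ n, horizontal p ^ n;
    star (horizontal p ^ n), (1 - height p : ℂ) ^ n]

theorem lineWeight_pos (n : ℕ) (p : Sphere2) : 0 < lineWeight n p := by
  obtain ⟨hlower, hupper⟩ := abs_le.1 (abs_height_le_one p)
  have hnorth : 0 ≤ (1 + height p) ^ n := pow_nonneg (by linarith) n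
  have hsouth : 0 ≤ (1 - height p) ^ n := pow_nonneg (by linarith) n
  rcases le_or_gt 0 (height p) with hp | hp
  · exact add_pos_of_pos_of_nonneg (pow_pos (by linarith) n) hsouth
  · exact add_pos_of_nonneg_of_pos hnorth (pow_pos (by linarith) n)

section LineProjection

variable (n : ℕ) (p : Sphere2)

theorem lineWeight_ne_zero : (lineWeight n p : ℂ) ≠ 0 :=
  Complex.ofReal_ne_zero.2 (lineWeight_pos n p).ne'

theorem continuous_lineProjection : Continuous (lineProjection n) := by
  have hheight := continuous_height
  have hhorizontal := continuous_horizontal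
  have hweight : Continuous fun p => (lineWeight n p : ℂ) := by unfold lineWeight; fun_prop
  refine (hweight.inv₀ (lineWeight_ne_zero n)).smul (continuous_matrix fun i j => ?_)
  fin_cases i <;> fin_cases j <;> dsimp <;> fun_prop

theorem isSelfAdjoint_lineProjection : IsSelfAdjoint (lineProjection n p) := by
  ext i j
  fin_cases i <;> fin_cases j <;> simp [lineProjection]

theorem trace_lineProjection : (lineProjection n p).trace = 1 := by
  rw [lineProjection, trace_smul, trace_fin_two_of, smul_eq_mul,
    inv_mul_eq_one₀ (lineWeight_ne_zero n p)]
  simp [lineWeight]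

theorem det_lineProjection : (lineProjection n p).det = 0 := by
  rw [lineProjection, det_smul, det_fin_two_of, star_pow, ← mul_pow, ← mul_pow,
    horizontal_mul_star, sub_self, mul_zero]

variable {p}

theorem lineProjection_zero_zero_ne_zero (hp : -1 < height p) : lineProjection n p 0 0 ≠ 0 := by
  have : (1 + height p : ℂ) ≠ 0 := mod_cast (by linarith : (0 : ℝ) < 1 + height p).ne'
  simp [lineProjection, (lineWeight_pos n p).ne', this]

theorem lineProjection_one_one_ne_zero (hp : height p < 1) : lineProjection n p 1 1 ≠ 0 := by
  have : (1 - height p : ℂ) ≠ 0 := mod_cast (by linarith : (0 : ℝ) < 1 - height p).ne'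
  simp [lineProjection, (lineWeight_pos n p).ne', this]

variable (hp : height p = 0)
include hp

theorem lineProjection_of_height_eq_zero :
    lineProjection n p =
      (2 : ℂ)⁻¹ • !![1, horizontal p ^ n; star (horizontal p ^ n), 1] := by
  norm_num [lineProjection, lineWeight, hp]

theorem horizontal_pow_mul_star_of_height_eq_zero :
    horizontal p ^ n * star (horizontal p ^ n) = 1 := by
  rw [star_pow, ← mul_pow, horizontal_mul_star, hp]
  simp

theorem lineProjection_zero_apply_of_height_eq_zero (j : Fin 2) :
    lineProjection n p 0 j = horizontal p ^ n * lineProjection n p 1 j := by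
  have hcircle := horizontal_pow_mul_star_of_height_eq_zero n hp
  rw [lineProjection_of_height_eq_zero n hp]
  generalize horizontal p ^ n = w at hcircle ⊢
  fin_cases j
  · change 2⁻¹ * 1 = w * (2⁻¹ * star w)
    linear_combination -2⁻¹ * hcircle
  · change 2⁻¹ * w = w * (2⁻¹ * 1)
    ring

theorem lineProjection_apply_one_of_height_eq_zero (i : Fin 2) :
    lineProjection n p i 1 = horizontal p ^ n * lineProjection n p i 0 := by
  have hcircle := horizontal_pow_mul_star_of_height_eq_zero n hp
  rw [lineProjection_of_height_eq_zero n hp]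
  generalize horizontal p ^ n = w at hcircle ⊢
  fin_cases i
  · change 2⁻¹ * w = w * (2⁻¹ * 1)
    ring
  · change 2⁻¹ * 1 = w * (2⁻¹ * star w)
    linear_combination -2⁻¹ * hcircle

variable {n} {m : ℕ} {U : Matrix (Fin 2) (Fin 2) ℂ}

theorem horizontal_pow_mul_apply_of_intertwining
    (h : lineProjection n p * U = U * lineProjection m p) :
    (lineProjection n p * U) 1 1 * horizontal p ^ n =
      horizontal p ^ m * (lineProjection n p * U) 0 0 := by
  have hrow : (lineProjection n p * U) 0 0 =
      horizontal p ^ n * (lineProjection n p * U) 1 0 := by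
    simp only [mul_apply, Finset.mul_sum, ← mul_assoc,
      lineProjection_zero_apply_of_height_eq_zero n hp]
  have hcol : (lineProjection n p * U) 1 1 =
      horizontal p ^ m * (lineProjection n p * U) 1 0 := by
    simp only [h]
    simp only [mul_apply, Finset.mul_sum, mul_left_comm _ (horizontal p ^ m),
      lineProjection_apply_one_of_height_eq_zero m hp]
  rw [hrow, hcol]
  ring

end LineProjection

theorem eq_of_lineProjection_intertwining {m n : ℕ} {U : Sphere2 → Matrix (Fin 2) (Fin 2) ℂ}
    (hU : Continuous U) (hUunit : ∀ p, IsUnit (U p))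
    (h : ∀ p, lineProjection n p * U p = U p * lineProjection m p) : n = m := by
  let M (p : Sphere2) := lineProjection n p * U p
  have hM : Continuous M := (continuous_lineProjection n).matrix_mul hU
  have hMne (p : Sphere2) (i : Fin 2) (hn : lineProjection n p i i ≠ 0)
      (hm : lineProjection m p i i ≠ 0) : M p i i ≠ 0 :=
    mul_apply_self_ne_zero_of_mul_eq_mul
      (mul_apply_eq_mul_apply_of_det_eq_zero (det_lineProjection n p) i i) (hUunit p) (h p) hn hm
  have hnorth (z : ℂ) : M (invStereographic z) 0 0 ≠ 0 := by
    have hz := neg_one_lt_height_invStereographic z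
    exact hMne _ 0 (lineProjection_zero_zero_ne_zero n hz) (lineProjection_zero_zero_ne_zero m hz)
  have hsouth (z : ℂ) : M (reflect (invStereographic z)) 1 1 ≠ 0 := by
    have hz : height (reflect (invStereographic z)) < 1 := by
      rw [height_reflect]
      linarith [neg_one_lt_height_invStereographic z]
    exact hMne _ 1 (lineProjection_one_one_ne_zero n hz) (lineProjection_one_one_ne_zero m hz)
  have hequator (z : ℂ) (hz : ‖z‖ = 1) :
      M (reflect (invStereographic z)) 1 1 / M (invStereographic z) 0 0 = z ^ (m - n : ℤ) := by
    have hz₀ : z ≠ 0 := norm_ne_zero_iff.1 (hz.trans_ne one_ne_zero)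
    have hratio := horizontal_pow_mul_apply_of_intertwining
      (height_invStereographic_of_norm_eq_one hz) (h (invStereographic z))
    rw [horizontal_invStereographic_of_norm_eq_one hz] at hratio
    rw [reflect_invStereographic_of_norm_eq_one hz, zpow_sub₀ hz₀, zpow_natCast, zpow_natCast,
      div_eq_div_iff (hnorth z) (pow_ne_zero n hz₀), hratio]
  have hMnorth := (hM.comp continuous_invStereographic).matrix_elem 0 0
  have hMsouth := (hM.comp (continuous_reflect.comp continuous_invStereographic)).matrix_elem 1 1
  have hdegree : (m - n : ℤ) = 0 := eq_zero_of_eqOn_circle_zpow (hMsouth.div hMnorth hnorth)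
    (fun z => div_ne_zero (hsouth z) (hnorth z)) hequator
  omega

/-- Continuous normal `2 × 2` matrices over a space `X` with characteristic polynomial
`(t - l₁ x) * (t - l₂ x)`; for `X = S² × S²` this is `NormalWithTwoEigenvalues`. -/
def NormalWithEigenvalues {X : Type*} [TopologicalSpace X] (l₁ l₂ : X → ℂ) :
    Set (X → Matrix (Fin 2) (Fin 2) ℂ) :=
  {A | Continuous A ∧ (∀ x, A x * (A x)ᴴ = (A x)ᴴ * A x) ∧
    ∀ x, ∀ t : ℂ, (t • (1 : Matrix (Fin 2) (Fin 2) ℂ) - A x).det = (t - l₁ x) * (t - l₂ x)}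

section Retract

variable {X : Type*} [TopologicalSpace X] {l₁ l₂ : X → ℂ} {π : X → Sphere2} {σ : Sphere2 → X}

theorem spectralSum_lineProjection_mem (hl₁ : Continuous l₁) (hl₂ : Continuous l₂)
    (hπ : Continuous π) (n : ℕ) :
    (fun x => spectralSum (l₁ x) (l₂ x) (lineProjection n (π x))) ∈
      NormalWithEigenvalues l₁ l₂ := by
  refine ⟨?_, fun x => ?_, fun x t => ?_⟩
  · have hP := continuous_lineProjection n
    unfold spectralSum
    fun_prop
  · exact (isStarNormal_spectralSum _ _
      (isSelfAdjoint_lineProjection n (π x))).star_comm_self.eq.symm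
  · exact det_smul_one_sub_spectralSum _ _ t (trace_lineProjection n _) (det_lineProjection n _)

theorem eq_of_unitarilyEquiv_spectralSum_lineProjection (hσ : Continuous σ)
    (hπσ : Function.LeftInverse π σ) (hdist : ∀ p, l₁ (σ p) ≠ l₂ (σ p)) {m n : ℕ}
    (h : UnitarilyEquiv (fun x => spectralSum (l₁ x) (l₂ x) (lineProjection n (π x)))
      (fun x => spectralSum (l₁ x) (l₂ x) (lineProjection m (π x)))) : n = m := by
  obtain ⟨U, hU, hUunit, hUA⟩ := h.exists_intertwining
  refine eq_of_lineProjection_intertwining (hU.comp hσ) (fun p => hUunit (σ p)) fun p => ?_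
  simpa only [hπσ p, Function.comp_apply] using
    mul_eq_mul_of_spectralSum_mul_eq (hdist p) (hUA (σ p))

theorem stmt_7_general (hl₁ : Continuous l₁) (hl₂ : Continuous l₂) (hπ : Continuous π)
    (hσ : Continuous σ) (hπσ : Function.LeftInverse π σ)
    (hdist : ∀ p, l₁ (σ p) ≠ l₂ (σ p)) :
    Infinite (Quot fun (A B : NormalWithEigenvalues l₁ l₂) => UnitarilyEquiv A.1 B.1) := by
  let normalMatrix (n : ℕ) : NormalWithEigenvalues l₁ l₂ :=
    ⟨_, spectralSum_lineProjection_mem hl₁ hl₂ hπ n⟩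
  refine Infinite.of_injective (fun n => Quot.mk _ (normalMatrix n)) fun n m hnm => ?_
  have hequiv : Equivalence fun (A B : NormalWithEigenvalues l₁ l₂) => UnitarilyEquiv A.1 B.1 :=
    UnitarilyEquiv.equivalence.comap Subtype.val
  exact eq_of_unitarilyEquiv_spectralSum_lineProjection hσ hπσ hdist
    (hequiv.quot_mk_eq_iff _ _ |>.1 hnm)

end Retract

/-- For any multiplicity-free split characteristic polynomial of degree two over `S² × S²`,
there are infinitely many unitary equivalence classes of normal matrices realizing it. -/
theorem stmt_7 (l₁ l₂ : Sphere2 × Sphere2 → ℂ)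
    (hl₁ : Continuous l₁) (hl₂ : Continuous l₂)
    (hdist : ∀ x, l₁ x ≠ l₂ x) :
    Infinite (Quot fun (A B : NormalWithTwoEigenvalues l₁ l₂) =>
      UnitarilyEquiv A.1 B.1) := by
  exact stmt_7_general hl₁ hl₂ continuous_fst
    (continuous_id.prodMk continuous_id) (fun _ => rfl) fun p => hdist (p, p)
end

section
/- Let S² = {(x,y,z) ∈ ℝ³ : x² + y² + z² = 1} and define A : S² → M(2,ℂ) by A(x,y,z) = [[x² + x³ + y² + xy² + i(1 − x)z², (y + iz)(x² + y² − iz²)], [(y − iz)(x² + y² − iz²), x² − x³ + y² − xy² + i(1 + x)z²]]. Then: (1) A(p) is normal for every p ∈ S²; (2) det(t·I − A(x,y,z)) = (t − 2(x² + y²))(t − 2iz²) for every (x,y,z) ∈ S², and the two eigenvalues 2(x² + y²) and 2iz² are distinct at every point of S²; (3) A is not diagonalizable over S²: there is no continuous U : S² → M(2,ℂ) with U(p)*U(p) = I for all p such that U(p)*A(p)U(p) is diagonal for every p. -/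
open Matrix Complex

/-- The explicit normal matrix over `S²` from Example 5.1. -/
noncomputable def matA (p : Sphere2) : Matrix (Fin 2) (Fin 2) ℂ :=
  let x : ℂ := (p.1.1 : ℂ)
  let y : ℂ := (p.1.2.1 : ℂ)
  let z : ℂ := (p.1.2.2 : ℂ)
  !![x ^ 2 + x ^ 3 + y ^ 2 + x * y ^ 2 + I * (1 - x) * z ^ 2,
      (y + I * z) * (x ^ 2 + y ^ 2 - I * z ^ 2);
    (y - I * z) * (x ^ 2 + y ^ 2 - I * z ^ 2),
      x ^ 2 - x ^ 3 + y ^ 2 - x * y ^ 2 + I * (1 + x) * z ^ 2]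

/-!
Write `A = α • 1 + β • N` with `α = x² + y² + iz²`, `β = x² + y² - iz²` and `N` the Pauli matrix
`xσ₃ + yσ₁ - zσ₂`, which is Hermitian and, on the sphere, squares to the identity. Normality and
the eigenvalues `α ± β` can be read off this formula. As `β` never vanishes on `S²`, eigenvectors
of `A` are eigenvectors of `N` for `±1`, and by connectedness a continuous field of eigenvectors
has a constant sign, which the antipodal map turns into `+1`. The `+1`-eigenlines of `N` form a
nontrivial line bundle on `S²`: the first coordinate of an eigenvector is nonzero off one pole and
the second off the other, and on the equator their ratio is `y + iz`. A continuous field of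
eigenvectors would therefore extend the identity of the unit circle to a nowhere vanishing function
on the plane, which has a continuous square root, whereas the identity of the circle has none.
-/

theorem not_exists_continuous_sq_eq_coe_circle :
    ¬∃ s : Circle → ℂ, Continuous s ∧ ∀ z : Circle, s z ^ 2 = z := by
  rintro ⟨s, hs, hsq⟩
  have half_angle := isPreconnected_univ.eq_or_eq_neg_of_sq_eq
    (f := fun θ : ℝ => s (Circle.exp θ)) (g := fun θ : ℝ => exp (θ / 2 * I))
    (by fun_prop) (by fun_prop)
    (fun θ _ => by
      simp only [Pi.pow_apply, hsq, Circle.coe_exp, ← exp_nat_mul]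
      ring_nf)
    (fun _ => exp_ne_zero _)
  have exp_half_two_pi : exp ((2 * Real.pi : ℝ) / 2 * I) = -1 := by
    rw [← exp_pi_mul_I]
    push_cast
    ring_nf
  rcases half_angle with h | h
  all_goals
    have at_zero := h (Set.mem_univ 0)
    have at_two_pi := h (Set.mem_univ (2 * Real.pi))
    simp only [Pi.neg_apply, Circle.exp_two_pi, Circle.exp_zero, exp_half_two_pi, ofReal_zero,
      zero_div, zero_mul, Complex.exp_zero] at at_zero at_two_pi
    norm_num [at_zero] at at_two_pi

theorem exists_eq_zero_of_forall_coe_circle_eq {F : ℂ → ℂ} (hF : Continuous F)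
    (h : ∀ z : Circle, F z = z) : ∃ w, F w = 0 := by
  by_contra! hne
  have plane : IsSimplyConnected (Set.univ : Set ℂ) :=
    (Homeomorph.Set.univ ℂ).toHomotopyEquiv.simplyConnectedSpace_iff.mpr inferInstance
  obtain ⟨s, hs, hsq⟩ := exists_continuousOn_pow_eq plane isOpen_univ hF.continuousOn
    (by simpa using hne) two_ne_zero
  rw [continuousOn_univ] at hs
  exact not_exists_continuous_sq_eq_coe_circle
    ⟨fun z => s z, by fun_prop, fun z => (hsq z).trans (h z)⟩

theorem eq_or_eq_neg_of_forall_eq_or_eq_neg {X E : Type*} [TopologicalSpace X]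
    [PreconnectedSpace X] [TopologicalSpace E] [T2Space E] [AddCommGroup E] [ContinuousNeg E]
    [IsAddTorsionFree E] {f g : X → E} (hf : Continuous f) (hg : Continuous g)
    (hne : ∀ x, g x ≠ 0) (h : ∀ x, f x = g x ∨ f x = -g x) : f = g ∨ f = -g := by
  have disjoint : Set.univ ∩ ({x | f x = g x} ∩ {x | f x = -g x}) = ∅ :=
    Set.subset_empty_iff.mp fun x ⟨_, hpos, hneg⟩ =>
      hne x (self_eq_neg.mp (hpos.symm.trans hneg))
  exact (isPreconnected_iff_subset_of_disjoint_closed.mp isPreconnected_univ _ _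
    (isClosed_eq hf hg) (isClosed_eq hf hg.neg) (fun x _ => h x) disjoint).imp
    (fun h => funext fun x => h (Set.mem_univ x)) (fun h => funext fun x => h (Set.mem_univ x))

theorem isStarNormal_smul_one_add_smul {R A : Type*} [CommSemiring R] [StarRing R] [Semiring A]
    [StarRing A] [Algebra R A] [StarModule R A] (r s : R) (a : A) [IsStarNormal a] :
    IsStarNormal (r • (1 : A) + s • a) :=
  ((Commute.one_left _).smul_left r).isStarNormal_add

section Eigenvectors

variable {n 𝕜 : Type*} [Fintype n] [DecidableEq n]

theorem mulVec_col_eq_smul_of_isDiag [CommSemiring 𝕜] {M U V : Matrix n n 𝕜} (hUV : U * V = 1)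
    (h : (V * M * U).IsDiag) (j : n) : M *ᵥ U.col j = (V * M * U) j j • U.col j := by
  have conj : M * U = U * diagonal (V * M * U).diag := by
    rw [h.diagonal_diag, ← Matrix.mul_assoc, ← Matrix.mul_assoc, hUV, Matrix.one_mul]
  ext i
  have entry := congrFun (congrFun conj i) j
  rwa [mul_diagonal, mul_comm] at entry

theorem col_ne_zero_of_mul_eq_one [Semiring 𝕜] [Nontrivial 𝕜] {U V : Matrix n n 𝕜}
    (hVU : V * U = 1) (j : n) : U.col j ≠ 0 := by
  intro h
  have entry : (V *ᵥ U.col j) j = 1 := (congrFun (congrFun hVU j) j).trans (one_apply_eq j)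
  simp [h] at entry

theorem mulVec_eq_self_or_eq_neg_of_mul_self_eq_one [Field 𝕜] {M : Matrix n n 𝕜} {u : n → 𝕜}
    {μ : 𝕜} (hM : M * M = 1) (hu : u ≠ 0) (h : M *ᵥ u = μ • u) :
    M *ᵥ u = u ∨ M *ᵥ u = -u := by
  have sq_smul : μ ^ 2 • u = (1 : 𝕜) • u := by
    rw [sq, mul_smul, ← h, ← mulVec_smul, ← h, mulVec_mulVec, hM, one_mulVec, one_smul]
  rcases sq_eq_one_iff.mp (smul_left_injective 𝕜 hu sq_smul) with rfl | rfl
  · exact .inl (by rw [h, one_smul])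
  · exact .inr (by rw [h, neg_one_smul])

theorem mulVec_eq_smul_of_smul_one_add_smul_mulVec_eq_smul [Field 𝕜] {M : Matrix n n 𝕜}
    {u : n → 𝕜} {a b μ : 𝕜} (hb : b ≠ 0)
    (h : (a • (1 : Matrix n n 𝕜) + b • M) *ᵥ u = μ • u) : M *ᵥ u = ((μ - a) / b) • u := by
  rw [add_mulVec, smul_mulVec, smul_mulVec, one_mulVec, ← eq_sub_iff_add_eq', ← sub_smul] at h
  rw [div_eq_inv_mul, mul_smul, ← h, inv_smul_smul₀ hb]

end Eigenvectors

/-- The matrix `xσ₃ + yσ₁ - zσ₂` attached to a vector `(x, y, z)`, with `σ₁, σ₂, σ₃` the Pauli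
matrices. -/
noncomputable def pauli (q : ℝ × ℝ × ℝ) : Matrix (Fin 2) (Fin 2) ℂ :=
  !![(q.1 : ℂ), q.2.1 + I * q.2.2; q.2.1 - I * q.2.2, -q.1]

@[fun_prop]
theorem continuous_pauli : Continuous pauli := by
  unfold pauli
  fun_prop

section Pauli

variable (q : ℝ × ℝ × ℝ)

theorem pauli_isHermitian : (pauli q).IsHermitian := by
  ext i j
  fin_cases i <;> fin_cases j <;> simp [pauli, sub_eq_add_neg]

theorem pauli_mul_self :
    pauli q * pauli q = ((q.1 ^ 2 + q.2.1 ^ 2 + q.2.2 ^ 2 : ℝ) : ℂ) • 1 := by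
  ext i j
  fin_cases i <;> fin_cases j <;> simp [pauli, mul_apply] <;> grind [I_sq]

theorem pauli_neg : pauli (-q) = -pauli q := by
  ext i j
  fin_cases i <;> fin_cases j <;> simp [pauli] <;> ring

theorem det_smul_one_sub_smul_pauli (a b : ℂ) :
    (a • (1 : Matrix (Fin 2) (Fin 2) ℂ) - b • pauli q).det =
      a ^ 2 - b ^ 2 * ((q.1 ^ 2 + q.2.1 ^ 2 + q.2.2 ^ 2 : ℝ) : ℂ) := by
  simp only [pauli, det_fin_two, Matrix.sub_apply, Matrix.smul_apply, smul_eq_mul, of_apply,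
    cons_val', cons_val_zero, cons_val_one, cons_val_fin_one, one_apply_eq, one_apply_ne, ne_eq,
    zero_ne_one, one_ne_zero, not_false_eq_true, ofReal_add, ofReal_pow]
  grind [I_sq]

variable {q} {u : Fin 2 → ℂ}

theorem pauli_mulVec_eq_self_iff :
    pauli q *ᵥ u = u ↔
      (1 - q.1) * u 0 = (q.2.1 + I * q.2.2) * u 1 ∧
        (1 + q.1) * u 1 = (q.2.1 - I * q.2.2) * u 0 := by
  simp only [pauli, funext_iff, Fin.forall_fin_two, mulVec_fin_two, of_apply, cons_val',
    cons_val_zero, cons_val_one, cons_val_fin_one]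
  grind

theorem apply_zero_ne_zero_of_pauli_mulVec_eq_self (h : pauli q *ᵥ u = u) (hu : u ≠ 0)
    (hq : 1 + q.1 ≠ 0) : u 0 ≠ 0 := by
  intro h₀
  have h₁_mul : (1 + (q.1 : ℂ)) * u 1 = 0 := by simpa [h₀] using (pauli_mulVec_eq_self_iff.mp h).2
  have h₁ : u 1 = 0 := (mul_eq_zero.mp h₁_mul).resolve_left (mod_cast hq)
  exact hu (funext (Fin.forall_fin_two.mpr ⟨h₀, h₁⟩))

theorem apply_one_ne_zero_of_pauli_mulVec_eq_self (h : pauli q *ᵥ u = u) (hu : u ≠ 0)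
    (hq : 1 - q.1 ≠ 0) : u 1 ≠ 0 := by
  intro h₁
  have h₀_mul : (1 - (q.1 : ℂ)) * u 0 = 0 := by simpa [h₁] using (pauli_mulVec_eq_self_iff.mp h).1
  have h₀ : u 0 = 0 := (mul_eq_zero.mp h₀_mul).resolve_left (mod_cast hq)
  exact hu (funext (Fin.forall_fin_two.mpr ⟨h₀, h₁⟩))

end Pauli

namespace Sphere2

instance : PreconnectedSpace Sphere2 := by
  have mem (v : Metric.sphere (0 : EuclideanSpace ℝ (Fin 3)) 1) :
      v.1 0 ^ 2 + v.1 1 ^ 2 + v.1 2 ^ 2 = 1 := by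
    have := EuclideanSpace.real_norm_sq_eq v.1
    rwa [norm_eq_of_mem_sphere, one_pow, Fin.sum_univ_three, eq_comm] at this
  let toSphere2 (v : Metric.sphere (0 : EuclideanSpace ℝ (Fin 3)) 1) : Sphere2 :=
    ⟨(v.1 0, v.1 1, v.1 2), mem v⟩
  have continuous_toSphere2 : Continuous toSphere2 := Continuous.subtype_mk (by fun_prop) _
  have surjective_toSphere2 : Function.Surjective toSphere2 := by
    rintro ⟨⟨x, y, z⟩, h⟩
    refine ⟨⟨!₂[x, y, z], ?_⟩, rfl⟩
    simpa [EuclideanSpace.norm_eq, Fin.sum_univ_three] using h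
  have : PreconnectedSpace (Metric.sphere (0 : EuclideanSpace ℝ (Fin 3)) 1) :=
    isPreconnected_iff_preconnectedSpace.mp <|
      isPreconnected_sphere (Module.one_lt_rank_of_one_lt_finrank (by simp)) 0 1
  exact surjective_toSphere2.denseRange.preconnectedSpace continuous_toSphere2

/-- The point `-p` of the sphere. -/
def antipode (p : Sphere2) : Sphere2 :=
  ⟨-p.1, by simpa using p.2⟩

@[fun_prop]
theorem continuous_antipode : Continuous antipode :=
  Continuous.subtype_mk continuous_subtype_val.neg _

theorem one_add_normSq_ne_zero (w : ℂ) : 1 + normSq w ≠ 0 := by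
  positivity [normSq_nonneg w]

/-- The inverse of the stereographic projection from the pole `(-1, 0, 0)` onto the equatorial
plane `x = 0`, whose points `(0, y, z)` are written as complex numbers `y + iz`. -/
noncomputable def stereoInv (w : ℂ) : Sphere2 :=
  ⟨((1 - normSq w) / (1 + normSq w), 2 * w.re / (1 + normSq w), 2 * w.im / (1 + normSq w)), by
    have := one_add_normSq_ne_zero w
    field_simp
    rw [normSq_apply]
    ring⟩

@[fun_prop]
theorem continuous_stereoInv : Continuous stereoInv := by
  have := continuous_normSq
  exact Continuous.subtype_mk (by fun_prop (disch := exact one_add_normSq_ne_zero)) _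

theorem one_add_stereoInv_fst_ne_zero (w : ℂ) : 1 + (stereoInv w).1.1 ≠ 0 := by
  have denom_ne := one_add_normSq_ne_zero w
  have : 1 + (stereoInv w).1.1 = 2 / (1 + normSq w) := by
    simp only [stereoInv]
    field_simp
    ring
  rw [this]
  exact div_ne_zero two_ne_zero denom_ne

theorem stereoInv_coe_circle (z : Circle) : (stereoInv z).1 = (0, (z : ℂ).re, (z : ℂ).im) := by
  norm_num [stereoInv, Circle.normSq_coe]

theorem antipode_stereoInv_neg_coe_circle (z : Circle) :
    antipode (stereoInv (-z)) = stereoInv z := by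
  apply Subtype.ext
  norm_num [antipode, stereoInv, Circle.normSq_coe, neg_div]

end Sphere2

open Sphere2

theorem exists_eq_zero_of_pauli_mulVec_eq_self {v : Sphere2 → Fin 2 → ℂ} (hv : Continuous v)
    (h : ∀ p, pauli p.1 *ᵥ v p = v p) : ∃ p, v p = 0 := by
  by_contra! hne
  have left_ne (w : ℂ) : v (stereoInv w) 0 ≠ 0 :=
    apply_zero_ne_zero_of_pauli_mulVec_eq_self (h _) (hne _) (one_add_stereoInv_fst_ne_zero w)
  have right_ne (w : ℂ) : v (antipode (stereoInv (-w))) 1 ≠ 0 :=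
    apply_one_ne_zero_of_pauli_mulVec_eq_self (h _) (hne _) (by
      simpa [antipode] using one_add_stereoInv_fst_ne_zero (-w))
  have ratio_circle (z : Circle) :
      v (stereoInv z) 0 / v (antipode (stereoInv (-z))) 1 = z := by
    rw [div_eq_iff (right_ne z), antipode_stereoInv_neg_coe_circle]
    have := (pauli_mulVec_eq_self_iff.mp (h (stereoInv z))).1
    rw [stereoInv_coe_circle] at this
    simpa [mul_comm I, re_add_im] using this
  obtain ⟨w, hw⟩ := exists_eq_zero_of_forall_coe_circle_eq
    (F := fun w => v (stereoInv w) 0 / v (antipode (stereoInv (-w))) 1)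
    (by fun_prop (disch := exact right_ne _)) ratio_circle
  exact div_ne_zero (left_ne w) (right_ne w) hw

theorem exists_eq_zero_of_pauli_mulVec_eq_smul {v : Sphere2 → Fin 2 → ℂ} (hv : Continuous v)
    (h : ∀ p, ∃ μ : ℂ, pauli p.1 *ᵥ v p = μ • v p) : ∃ p, v p = 0 := by
  by_contra! hne
  have eigen_sign (p : Sphere2) : pauli p.1 *ᵥ v p = v p ∨ pauli p.1 *ᵥ v p = -v p := by
    obtain ⟨μ, hμ⟩ := h p
    exact mulVec_eq_self_or_eq_neg_of_mul_self_eq_one (by simp [pauli_mul_self, p.2]) (hne p) hμ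
  have continuous_image : Continuous fun p : Sphere2 => pauli p.1 *ᵥ v p := by
    have : Continuous fun p : Sphere2 => p.1 := continuous_subtype_val
    fun_prop
  rcases eq_or_eq_neg_of_forall_eq_or_eq_neg continuous_image hv hne eigen_sign with hpos | hneg
  · obtain ⟨p, hp⟩ := exists_eq_zero_of_pauli_mulVec_eq_self hv (congrFun hpos)
    exact hne p hp
  · obtain ⟨p, hp⟩ := exists_eq_zero_of_pauli_mulVec_eq_self (hv.comp continuous_antipode)
      fun p => by
        have : pauli (-p.1) *ᵥ v (antipode p) = -v (antipode p) := congrFun hneg (antipode p)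
        rwa [pauli_neg, neg_mulVec, neg_inj] at this
    exact hne _ hp

/-- Half the sum of the two eigenvalues of `matA`. -/
noncomputable def eigenvalueMean (p : Sphere2) : ℂ :=
  p.1.1 ^ 2 + p.1.2.1 ^ 2 + I * p.1.2.2 ^ 2

/-- Half the difference of the two eigenvalues of `matA`. -/
noncomputable def eigenvalueHalfGap (p : Sphere2) : ℂ :=
  p.1.1 ^ 2 + p.1.2.1 ^ 2 - I * p.1.2.2 ^ 2

theorem eigenvalueHalfGap_ne_zero (p : Sphere2) : eigenvalueHalfGap p ≠ 0 := by
  intro h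
  have re_eq : p.1.1 ^ 2 + p.1.2.1 ^ 2 = 0 := by
    simpa [eigenvalueHalfGap, ← ofReal_pow] using congrArg re h
  have im_eq : p.1.2.2 ^ 2 = 0 := by
    simpa [eigenvalueHalfGap, ← ofReal_pow] using congrArg im h
  linarith [p.2]

theorem matA_eq_smul_one_add_smul_pauli (p : Sphere2) :
    matA p = eigenvalueMean p • 1 + eigenvalueHalfGap p • pauli p.1 := by
  ext i j
  fin_cases i <;> fin_cases j <;>
    simp [matA, pauli, eigenvalueMean, eigenvalueHalfGap] <;> ring

theorem matA_isStarNormal (p : Sphere2) : IsStarNormal (matA p) := by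
  have : IsStarNormal (pauli p.1) := (pauli_isHermitian p.1).isSelfAdjoint.isStarNormal
  rw [matA_eq_smul_one_add_smul_pauli]
  exact isStarNormal_smul_one_add_smul _ _ _

theorem det_smul_one_sub_matA (p : Sphere2) (t : ℂ) :
    (t • (1 : Matrix (Fin 2) (Fin 2) ℂ) - matA p).det =
      (t - (eigenvalueMean p + eigenvalueHalfGap p)) *
        (t - (eigenvalueMean p - eigenvalueHalfGap p)) := by
  rw [matA_eq_smul_one_add_smul_pauli, ← sub_sub, ← sub_smul, det_smul_one_sub_smul_pauli, p.2]
  push_cast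
  ring

theorem exists_eq_zero_of_matA_mulVec_eq_smul {v : Sphere2 → Fin 2 → ℂ} (hv : Continuous v)
    (h : ∀ p, ∃ μ : ℂ, matA p *ᵥ v p = μ • v p) : ∃ p, v p = 0 := by
  refine exists_eq_zero_of_pauli_mulVec_eq_smul hv fun p => ?_
  obtain ⟨μ, hμ⟩ := h p
  rw [matA_eq_smul_one_add_smul_pauli] at hμ
  exact ⟨_, mulVec_eq_smul_of_smul_one_add_smul_mulVec_eq_smul (eigenvalueHalfGap_ne_zero p) hμ⟩

/-- The matrix `matA` is pointwise normal, has characteristic polynomial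
`(t - 2(x² + y²))(t - 2iz²)` with pointwise distinct eigenvalues, and yet is not diagonalizable
by a continuous unitary over `S²`. -/
theorem stmt_9 :
    (∀ p : Sphere2, matA p * (matA p)ᴴ = (matA p)ᴴ * matA p) ∧
    (∀ p : Sphere2, ∀ t : ℂ,
      (t • (1 : Matrix (Fin 2) (Fin 2) ℂ) - matA p).det =
        (t - 2 * ((p.1.1 : ℂ) ^ 2 + (p.1.2.1 : ℂ) ^ 2)) * (t - 2 * I * (p.1.2.2 : ℂ) ^ 2)) ∧
    (∀ p : Sphere2,
      2 * ((p.1.1 : ℂ) ^ 2 + (p.1.2.1 : ℂ) ^ 2) ≠ 2 * I * (p.1.2.2 : ℂ) ^ 2) ∧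
    ¬∃ U : Sphere2 → Matrix (Fin 2) (Fin 2) ℂ, Continuous U ∧
      (∀ p, (U p)ᴴ * U p = 1) ∧ ∀ p, ((U p)ᴴ * matA p * U p).IsDiag := by
  refine ⟨fun p => (matA_isStarNormal p).star_comm_self.eq.symm, fun p t => ?_, fun p h => ?_, ?_⟩
  · rw [det_smul_one_sub_matA, eigenvalueMean, eigenvalueHalfGap]
    ring
  · apply eigenvalueHalfGap_ne_zero p
    rw [eigenvalueHalfGap]
    linear_combination h / 2
  · rintro ⟨U, hU, hunitary, hdiag⟩
    obtain ⟨p, hp⟩ := exists_eq_zero_of_matA_mulVec_eq_smul (v := fun p => (U p).col 0)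
      (continuous_pi fun i => hU.matrix_elem i 0) fun p =>
        ⟨_, mulVec_col_eq_smul_of_isDiag (mul_eq_one_comm.mp (hunitary p)) (hdiag p) 0⟩
    exact col_ne_zero_of_mul_eq_one (hunitary p) 0 hp
end
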